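/- For every integer k > 1 there is no proper gradient map f : ℝ² → ℝ² with Brouwer degree deg f = k; that is, the set of proper gradient homotopy classes of proper gradient maps of degree k on ℝ² is empty for k > 1. -/

import Mathlib

open Set Metric Filter

noncomputable section

/-- Euclidean space `ℝⁿ`. -/
abbrev Euc (n : ℕ) := EuclideanSpace ℝ (Fin n)

/-- A map `f : ℝⁿ → ℝⁿ` is gradient if it is the gradient of a `C¹` function `φ : ℝⁿ → ℝ`. -/
def IsGradient {n : ℕ} (f : Euc n → Euc n) : Prop :=
  ∃ φ : Euc n → ℝ, ContDiff ℝ 1 φ ∧ ∀ x, gradient φ x = f x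

/-- A map is proper if preimages of compact sets are compact (our maps are continuous anyway). -/
def IsProper {n : ℕ} (f : Euc n → Euc n) : Prop :=
  ∀ K : Set (Euc n), IsCompact K → IsCompact (f ⁻¹' K)

/-- `h : [0,1] × ℝⁿ → ℝⁿ` is a gradient homotopy: it is continuous, each `h t` is a
gradient map, and the zero set `h⁻¹(0)` (within `[0,1] × ℝⁿ`) is compact. -/
def IsGradientHomotopy {n : ℕ} (h : ℝ → Euc n → Euc n) : Prop :=
  ContinuousOn (fun p : ℝ × Euc n => h p.1 p.2) (Icc 0 1 ×ˢ univ) ∧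
  (∀ t ∈ Icc (0:ℝ) 1, IsGradient (h t)) ∧
  IsCompact {p : ℝ × Euc n | p.1 ∈ Icc (0:ℝ) 1 ∧ h p.1 p.2 = 0}

/-- Two maps are gradient homotopic if some gradient homotopy connects them. -/
def GradientHomotopic {n : ℕ} (f g : Euc n → Euc n) : Prop :=
  ∃ h : ℝ → Euc n → Euc n, IsGradientHomotopy h ∧ h 0 = f ∧ h 1 = g

/-- `h : [0,1] × ℝⁿ → ℝⁿ` is a proper gradient homotopy: it is continuous, each `h t` is a
gradient map, and `h` is proper as a map on `[0,1] × ℝⁿ`. -/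
def IsProperGradientHomotopy {n : ℕ} (h : ℝ → Euc n → Euc n) : Prop :=
  ContinuousOn (fun p : ℝ × Euc n => h p.1 p.2) (Icc 0 1 ×ˢ univ) ∧
  (∀ t ∈ Icc (0:ℝ) 1, IsGradient (h t)) ∧
  (∀ K : Set (Euc n), IsCompact K →
    IsCompact {p : ℝ × Euc n | p.1 ∈ Icc (0:ℝ) 1 ∧ h p.1 p.2 ∈ K})

/-- Two maps are proper gradient homotopic if some proper gradient homotopy connects them. -/
def ProperGradientHomotopic {n : ℕ} (f g : Euc n → Euc n) : Prop :=
  ∃ h : ℝ → Euc n → Euc n, IsProperGradientHomotopy h ∧ h 0 = f ∧ h 1 = g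
/-- A Brouwer degree theory on `ℝⁿ`: an integer-valued function `deg f Ω`, defined for
continuous maps nonvanishing on `∂Ω`, satisfying the classical axioms of normalization,
additivity and homotopy invariance, which determine it uniquely. -/
structure DegreeTheory (n : ℕ) where
  deg : (Euc n → Euc n) → Set (Euc n) → ℤ
  normalized : ∀ Ω : Set (Euc n), IsOpen Ω → Bornology.IsBounded Ω → (0 : Euc n) ∈ Ω →
    deg id Ω = 1
  additive : ∀ (f : Euc n → Euc n) (Ω Ω₁ Ω₂ : Set (Euc n)),
    IsOpen Ω → Bornology.IsBounded Ω → IsOpen Ω₁ → IsOpen Ω₂ →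
    Ω₁ ⊆ Ω → Ω₂ ⊆ Ω → Disjoint Ω₁ Ω₂ →
    ContinuousOn f (closure Ω) →
    (∀ x ∈ closure Ω \ (Ω₁ ∪ Ω₂), f x ≠ 0) →
    deg f Ω = deg f Ω₁ + deg f Ω₂
  homotopyInv : ∀ (h : ℝ → Euc n → Euc n) (Ω : Set (Euc n)),
    IsOpen Ω → Bornology.IsBounded Ω →
    ContinuousOn (fun p : ℝ × Euc n => h p.1 p.2) (Icc 0 1 ×ˢ closure Ω) →
    (∀ t ∈ Icc (0:ℝ) 1, ∀ x ∈ frontier Ω, h t x ≠ 0) →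
    deg (h 0) Ω = deg (h 1) Ω

/-- `f` has Brouwer degree `k`: `deg f` computed on any ball containing `f⁻¹(0)` equals `k`. -/
def HasDeg {n : ℕ} (D : DegreeTheory n) (f : Euc n → Euc n) (k : ℤ) : Prop :=
  ∀ R : ℝ, 0 < R → f ⁻¹' {0} ⊆ ball 0 R → D.deg f (ball 0 R) = k


/-!
A proper `f = ∇ψ` has `‖f‖` bounded below by some `ε > 0` outside a disc of radius `R`, where we may
take `ε * R ≥ 1`. Then `ψ` is unbounded there: a function bounded above and below on a large ball
has points with small gradient in it. Replacing `ψ` by `-ψ`, which in even dimension keeps the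
degree, we may assume that `ψ` is unbounded below.

The substitution `z = R * exp ζ` turns `ψ` into a function on the cylinder `ℂ / 2πiℤ` with gradient
`G = f(z) * conj z`, of norm at least `1` on `0 ≤ re ζ`. Let `w` be the winding number of `G` along
the end circle `re ζ = 0`; the winding number of `f` along `|z| = R` is `1 + w`, so it remains to
show `w ≤ 0`. Wherever the restriction to the end circle has an extremum, `G` is real. Counting the
crossings of the positive real axis, `w` is the number of local minima minus the number of local
maxima at which `G > 0`, that is, at which the function increases into the half-cylinder. These
minima are the local minima of the function on the half-cylinder, and these maxima are its only
saddles. Minima do not outnumber saddles, as in Morse theory: each minimum starts a new component of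
the sublevel sets, distinct from the one on which the function is very low, and each component
starting at a minimum must merge with another one at a saddle because the half-cylinder is
connected. The argument is carried out on a fine triangulation.
-/

section DiscreteMorse

variable {V W α : Type*} [LinearOrder α] {Γ : SimpleGraph V} {h : V → α}

/-- The lower link of a vertex `v` with respect to a height function `h` on a graph: the
neighbours of `v` lying below `v`. -/
def lowerLink (Γ : SimpleGraph V) (h : V → α) (v : V) : Set V := {u | Γ.Adj v u ∧ h u < h v}

/-- `c` is a degree-zero cocycle on the subgraph induced on `A`: it takes equal values at the ends
of every edge. -/
def ConstOnEdges (Γ : SimpleGraph V) (A : Set V) (c : V → ℝ) : Prop :=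
  ∀ u ∈ A, ∀ v ∈ A, Γ.Adj u v → c u = c v

/-- The subgraph induced on `A` becomes connected once `u₁` and `u₂` are identified, in
cohomological form. For `u₁ = u₂` this says that it is already connected. -/
def JoinedBy (Γ : SimpleGraph V) (A : Set V) (u₁ u₂ : V) : Prop :=
  ∀ c : V → ℝ, ConstOnEdges Γ A c → c u₁ = c u₂ → ∀ u ∈ A, ∀ v ∈ A, c u = c v

lemma JoinedBy.image {Γ' : SimpleGraph W} (f : Γ' →g Γ) {A : Set W} {a b : W}
    (hA : JoinedBy Γ' A a b) : JoinedBy Γ (f '' A) (f a) (f b) := by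
  rintro c hc hab _ ⟨i, hi, rfl⟩ _ ⟨j, hj, rfl⟩
  exact hA (c ∘ f) (fun u hu v hv huv =>
    hc _ (mem_image_of_mem f hu) _ (mem_image_of_mem f hv) (f.map_adj huv)) hab i hi j hj

/-- A height function on a graph, cut off at a set `low` of vertices below all of the finitely many
`active` ones, whose lower links are empty at `minima` and connected elsewhere, except that at
`saddles` they may have two components. -/
structure IsDiscreteMorse (Γ : SimpleGraph V) (h : V → α) (active : Finset V) (low : Set V)
    (minima saddles : Finset V) : Prop where
  injective : Function.Injective h
  low_lt : ∀ u ∈ low, ∀ v ∈ active, h u < h v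
  lowerLink_subset : ∀ v ∈ active, lowerLink Γ h v ⊆ active ∪ low
  minima_subset : minima ⊆ active
  lowerLink_minimum : ∀ v ∈ minima, lowerLink Γ h v = ∅
  lowerLink_joinedBy : ∀ v ∈ active, v ∉ minima →
    ∃ u₁ ∈ lowerLink Γ h v, ∃ u₂, JoinedBy Γ (lowerLink Γ h v) u₁ u₂ ∧ (v ∉ saddles → u₁ = u₂)

namespace IsDiscreteMorse

variable {active minima saddles : Finset V} {low : Set V}

lemma notMem_active (H : IsDiscreteMorse Γ h active low minima saddles) {u : V} (hu : u ∈ low) :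
    u ∉ active := fun hu' => lt_irrefl _ (H.low_lt u hu u hu')

lemma constOnEdges (H : IsDiscreteMorse Γ h active low minima saddles) {c : V → ℝ}
    (hlow : ∀ v ∈ low, c v = 0) {A : Set V} (hA : A ⊆ active ∪ low)
    (hc : ∀ v ∈ A, v ∈ active → ∀ u ∈ lowerLink Γ h v, c u = c v) : ConstOnEdges Γ A c := by
  intro u hu v hv huv
  wlog hlt : h u < h v generalizing u v
  · exact (this v hv u hu huv.symm
      ((not_lt.1 hlt).lt_of_ne fun heq => huv.ne (H.injective heq.symm))).symm
  rcases hA hv with hva | hvl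
  · exact hc v hv hva u ⟨huv.symm, hlt⟩
  · have hul : u ∈ low := (hA hu).resolve_left fun hua => lt_asymm hlt (H.low_lt v hvl u hua)
    rw [hlow u hul, hlow v hvl]

lemma induction (h : V → α) {p : V → Prop}
    (step : ∀ v ∈ active, (∀ u ∈ active, h u < h v → p u) → p v) : ∀ v ∈ active, p v := by
  have hwf : (active : Set V).WellFoundedOn (InvImage (· < ·) h) :=
    haveI : IsStrictOrder V (InvImage (· < ·) h) :=
      { irrefl := fun _ => lt_irrefl _, trans := fun _ _ _ => lt_trans }
    active.finite_toSet.wellFoundedOn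
  exact fun v hv => hwf.induction hv step

lemma eq_of_mem_lowerLink (H : IsDiscreteMorse Γ h active low minima saddles) {c : V → ℝ}
    (hlow : ∀ v ∈ low, c v = 0)
    (hc : ∀ v ∈ active, v ∉ minima → ∃ u₁ ∈ lowerLink Γ h v, ∃ u₂,
      JoinedBy Γ (lowerLink Γ h v) u₁ u₂ ∧ c v = c u₁ ∧ c u₁ = c u₂) :
    ∀ v ∈ active, ∀ u ∈ lowerLink Γ h v, c u = c v := by
  refine induction h fun v hv ih u hu => ?_
  by_cases hmin : v ∈ minima
  · simp only [H.lowerLink_minimum v hmin, mem_empty_iff_false] at hu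
  obtain ⟨u₁, hu₁, u₂, hjoin, hv₁, h₁₂⟩ := hc v hv hmin
  rw [hv₁]
  exact hjoin c (H.constOnEdges hlow (H.lowerLink_subset v hv) fun w hw hwa => ih w hwa hw.2)
    h₁₂ u hu u₁ hu₁

lemma eq_zero (H : IsDiscreteMorse Γ h active low minima saddles) {A : Set V}
    (hA : A ⊆ active ∪ low) {z : V} (hz : z ∈ A) (hzlow : z ∈ low) (hAz : JoinedBy Γ A z z)
    (hmin : ∀ v ∈ minima, v ∈ A) {c : V → ℝ} (hoff : ∀ v ∉ active, c v = 0)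
    (hc : ∀ v ∈ active, v ∉ minima → ∃ u₁ ∈ lowerLink Γ h v, ∃ u₂,
      JoinedBy Γ (lowerLink Γ h v) u₁ u₂ ∧ c v = c u₁ ∧ c u₁ = c u₂) (v : V) : c v = 0 := by
  have hlow : ∀ v ∈ low, c v = 0 := fun v hv => hoff v (H.notMem_active hv)
  have hlink := H.eq_of_mem_lowerLink hlow hc
  have hmin0 : ∀ v ∈ minima, c v = 0 := fun v hv =>
    (hAz c (H.constOnEdges hlow hA fun w _ => hlink w) rfl v (hmin v hv) z hz).trans
      (hlow z hzlow)
  by_cases hv : v ∈ active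
  swap
  · exact hoff v hv
  refine induction h (p := fun v => c v = 0) (fun v hv ih => ?_) v hv
  by_cases hvm : v ∈ minima
  · exact hmin0 v hvm
  obtain ⟨u, hu, -⟩ := H.lowerLink_joinedBy v hv hvm
  rw [← hlink v hv u hu]
  rcases H.lowerLink_subset v hv hu with hua | hul
  · exact ih u hua hu.2
  · exact hlow u hul

/-- Being constant down a chosen edge at each non-minimum, with equal values on the two sides of
each saddle, forces `c` to vanish: a linear system with only the zero solution, which has at least
as many equations as unknowns. -/
theorem card_minima_le_card_saddles (H : IsDiscreteMorse Γ h active low minima saddles) {A : Set V}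
    (hA : A ⊆ active ∪ low) {z : V} (hz : z ∈ A) (hzlow : z ∈ low) (hAz : JoinedBy Γ A z z)
    (hmin : ∀ v ∈ minima, v ∈ A) : minima.card ≤ saddles.card := by
  classical
  choose! u₁ hu₁ u₂ hjoin hreg using H.lowerLink_joinedBy
  let ext : (active → ℝ) →ₗ[ℝ] (V → ℝ) :=
    Function.ExtendByZero.linearMap ℝ ((↑) : active → V)
  have ext_off : ∀ c, ∀ v ∉ active, ext c v = 0 := fun c v hv =>
    Function.extend_apply' _ _ _ fun ⟨a, ha⟩ => hv (ha ▸ a.2)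
  let equations : (active → ℝ) →ₗ[ℝ] ((active \ minima : Finset V) → ℝ) × (saddles → ℝ) :=
    ((LinearMap.funLeft ℝ ℝ (fun v : (active \ minima : Finset V) => (v : V)) -
      LinearMap.funLeft ℝ ℝ (fun v : (active \ minima : Finset V) => u₁ v)).prod
    (LinearMap.funLeft ℝ ℝ (fun v : saddles => u₁ v) -
      LinearMap.funLeft ℝ ℝ (fun v : saddles => u₂ v))) ∘ₗ ext
  have hinj : Function.Injective equations := by
    refine (injective_iff_map_eq_zero _).2 fun c hc => ?_
    have hdown : ∀ v ∈ active, v ∉ minima → ext c v = ext c (u₁ v) := fun v hv hvm =>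
      sub_eq_zero.1 (congrFun (congrArg Prod.fst hc) ⟨v, Finset.mem_sdiff.2 ⟨hv, hvm⟩⟩)
    have hsaddle : ∀ v ∈ saddles, ext c (u₁ v) = ext c (u₂ v) := fun v hv =>
      sub_eq_zero.1 (congrFun (congrArg Prod.snd hc) ⟨v, hv⟩)
    have hzero : ∀ v, ext c v = 0 :=
      H.eq_zero hA hz hzlow hAz hmin (ext_off c) fun v hv hvm =>
        ⟨u₁ v, hu₁ v hv hvm, u₂ v, hjoin v hv hvm, hdown v hv hvm, by
          by_cases hvs : v ∈ saddles
          · exact hsaddle v hvs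
          · rw [hreg v hv hvm hvs]⟩
    ext v
    exact (Subtype.val_injective.extend_apply c 0 v).symm.trans (hzero v)
  have hrank := LinearMap.finrank_le_finrank_of_injective hinj
  simp only [Module.finrank_prod, Module.finrank_fintype_fun_eq_card, Fintype.card_coe,
    Finset.card_sdiff_of_subset H.minima_subset] at hrank
  have := Finset.card_le_card H.minima_subset
  lia

end IsDiscreteMorse

end DiscreteMorse

section HexagonalLattice

/-- The six edge directions `(ds, dθ)` of the triangulated square lattice, in cyclic order. -/
def hexStep : Fin 6 → ℤ × ℤ := ![(0, 1), (1, 1), (1, 0), (0, -1), (-1, -1), (-1, 0)]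

lemma hexStep_add_two : ∀ k, hexStep (k + 2) = hexStep (k + 1) - hexStep k := by decide

lemma hexStep_add_three : ∀ k, hexStep (k + 3) = -hexStep k := by decide

variable {N : ℕ}

/-- The neighbour in direction `k` of a vertex `v` of the triangulated square lattice on a cylinder,
whose rows are indexed by `ℤ` and whose columns are indexed by `ZMod N`. -/
def nbr (v : ℤ × ZMod N) (k : Fin 6) : ℤ × ZMod N :=
  (v.1 + (hexStep k).1, v.2 + (hexStep k).2)

lemma nbr_nbr_add_three (v : ℤ × ZMod N) (k : Fin 6) : nbr (nbr v k) (k + 3) = v := by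
  simp [nbr, hexStep_add_three]

lemma nbr_nbr_add_two (v : ℤ × ZMod N) (k : Fin 6) : nbr (nbr v k) (k + 2) = nbr v (k + 1) := by
  simp [nbr, hexStep_add_two]

lemma nbr_ne_self [Nontrivial (ZMod N)] (v : ℤ × ZMod N) (k : Fin 6) : nbr v k ≠ v := by
  fin_cases k <;> simp [nbr, hexStep, Prod.ext_iff]

/-- The triangulated square lattice on a cylinder. -/
def cylinderGrid (N : ℕ) : SimpleGraph (ℤ × ZMod N) where
  Adj u v := u ≠ v ∧ ∃ k, v = nbr u k
  symm := ⟨by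
    rintro u _ ⟨huv, k, rfl⟩
    exact ⟨huv.symm, k + 3, (nbr_nbr_add_three u k).symm⟩⟩

lemma cylinderGrid_adj_nbr [Nontrivial (ZMod N)] (v : ℤ × ZMod N) (k : Fin 6) :
    (cylinderGrid N).Adj v (nbr v k) := ⟨(nbr_ne_self v k).symm, k, rfl⟩

/-- The six neighbours of a vertex form a hexagon around it. -/
def hexagon [Nontrivial (ZMod N)] (v : ℤ × ZMod N) :
    SimpleGraph.cycleGraph 6 →g cylinderGrid N where
  toFun := nbr v
  map_rel' {a b} hab := by
    have hsucc (k : Fin 6) : (cylinderGrid N).Adj (nbr v k) (nbr v (k + 1)) :=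
      nbr_nbr_add_two v k ▸ cylinderGrid_adj_nbr (nbr v k) (k + 2)
    rcases SimpleGraph.cycleGraph_adj.1 hab with h | h
    · obtain rfl := eq_add_of_sub_eq' h
      exact (hsucc b).symm
    · obtain rfl := eq_add_of_sub_eq' h
      exact hsucc a

/-- The directions in which a height function on the grid descends from `v`. -/
def lowerDirs {α : Type*} [LinearOrder α] (h : ℤ × ZMod N → α) (v : ℤ × ZMod N) : Set (Fin 6) :=
  {k | h (nbr v k) < h v}

lemma mem_lowerDirs {α : Type*} [LinearOrder α] {h : ℤ × ZMod N → α} {v : ℤ × ZMod N}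
    {k : Fin 6} : k ∈ lowerDirs h v ↔ h (nbr v k) < h v := Iff.rfl

lemma lowerLink_cylinderGrid [Nontrivial (ZMod N)] {α : Type*} [LinearOrder α]
    (h : ℤ × ZMod N → α) (v : ℤ × ZMod N) :
    lowerLink (cylinderGrid N) h v = hexagon v '' lowerDirs h v := by
  ext u
  constructor
  · rintro ⟨⟨-, k, rfl⟩, hlt⟩
    exact ⟨k, hlt, rfl⟩
  · rintro ⟨k, hk, rfl⟩
    exact ⟨cylinderGrid_adj_nbr v k, hk⟩

end HexagonalLattice

section HexLink

/-- The derivative `ds · re z + dθ · im z` of a function with gradient `z` in direction `k`. -/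
def hexForm (z : ℂ) (k : Fin 6) : ℝ := z.re * (hexStep k).1 + z.im * (hexStep k).2

lemma hexForm_add_two (z : ℂ) (k : Fin 6) :
    hexForm z (k + 2) = hexForm z (k + 1) - hexForm z k := by
  simp only [hexForm, hexStep_add_two, Prod.fst_sub, Prod.snd_sub, Int.cast_sub]
  ring

lemma hexForm_add_three (z : ℂ) (k : Fin 6) : hexForm z (k + 3) = -hexForm z k := by
  simp only [hexForm, hexStep_add_three, Prod.fst_neg, Prod.snd_neg, Int.cast_neg]
  ring

lemma hexForm_zero (z : ℂ) : hexForm z 0 = z.im := by simp [hexForm, hexStep]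

lemma hexForm_one (z : ℂ) : hexForm z 1 = z.re + z.im := by simp [hexForm, hexStep]

lemma hexForm_two (z : ℂ) : hexForm z 2 = z.re := by simp [hexForm, hexStep]

lemma hexForm_three (z : ℂ) : hexForm z 3 = -z.im := by simp [hexForm, hexStep]

lemma hexForm_five (z : ℂ) : hexForm z 5 = -z.re := by simp [hexForm, hexStep]

lemma one_le_sq_add_sq {z : ℂ} (hz : 1 ≤ ‖z‖) : 1 ≤ z.re ^ 2 + z.im ^ 2 := by
  have hsq := one_le_pow₀ hz (n := 2)
  rwa [Complex.sq_norm, Complex.normSq_apply, ← sq, ← sq] at hsq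

lemma exists_hexForm_lt_neg_half {z : ℂ} (hz : 1 ≤ ‖z‖) : ∃ k, hexForm z k < -1 / 2 := by
  by_contra! h
  have hre : z.re ^ 2 ≤ (1 / 2) ^ 2 := sq_le_sq'
    (by linarith [h 2, hexForm_two z]) (by linarith [h 5, hexForm_five z])
  have him : z.im ^ 2 ≤ (1 / 2) ^ 2 := sq_le_sq'
    (by linarith [h 0, hexForm_zero z]) (by linarith [h 3, hexForm_three z])
  linarith [one_le_sq_add_sq hz]

lemma exists_hexForm_lt {z : ℂ} (hz : 1 ≤ ‖z‖) :
    ∃ k, hexForm z k < -1 / 4 ∧ hexForm z (k + 1) < -1 / 4 := by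
  obtain ⟨k, hk⟩ := exists_hexForm_lt_neg_half hz
  have hsum := hexForm_add_two z (k - 1)
  rw [sub_add_cancel, show k - 1 + 2 = k + 1 by abel_nf; rfl] at hsum
  rcases lt_or_ge (hexForm z (k + 1)) (-1 / 4) with h | h
  · exact ⟨k, by linarith, h⟩
  · exact ⟨k - 1, by linarith, by rw [sub_add_cancel]; linarith⟩

lemma JoinedBy.of_forall_eq {V : Type*} {Γ : SimpleGraph V} {A : Set V} {a b : V}
    (h : ∀ c, ConstOnEdges Γ A c → c a = c b → ∀ u ∈ A, c u = c a) : JoinedBy Γ A a b :=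
  fun c hc hab u hu v hv => (h c hc hab u hu).trans (h c hc hab v hv).symm

lemma ConstOnEdges.eq_add_one {A : Set (Fin 6)} {c : Fin 6 → ℝ}
    (hc : ConstOnEdges (SimpleGraph.cycleGraph 6) A c) (k : Fin 6) (hk : k ∈ A) (hk' : k + 1 ∈ A) :
    c k = c (k + 1) :=
  hc k hk _ hk' (SimpleGraph.cycleGraph_adj.2 (.inr (add_sub_cancel_left k 1)))

lemma joinedBy_hexagon {A : Set (Fin 6)} {k : Fin 6} (h₀ : k ∈ A) (h₁ : k + 1 ∈ A)
    (h₃ : k + 3 ∉ A) (h₄ : k + 4 ∉ A) : JoinedBy (SimpleGraph.cycleGraph 6) A k k := by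
  refine .of_forall_eq fun c hc _ u hu => ?_
  obtain ⟨j, rfl⟩ : ∃ j, u = k + j := ⟨u - k, (add_sub_cancel k u).symm⟩
  fin_cases j
  · simp
  · exact (hc.eq_add_one k h₀ h₁).symm
  · rw [hc.eq_add_one k h₀ h₁, hc.eq_add_one (k + 1) h₁ (by rwa [add_assoc])]
    rw [add_assoc]; rfl
  · exact absurd hu h₃
  · exact absurd hu h₄
  · have hk : k + 5 + 1 = k := by rw [add_assoc]; exact add_zero k
    have := hc.eq_add_one (k + 5) hu (by rwa [hk])
    rwa [hk] at this

lemma joinedBy_hexagon_boundary {A : Set (Fin 6)} (h₀ : 0 ∈ A) (h₃ : 3 ∈ A) (h₄ : 4 ∉ A)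
    (h₅ : 5 ∉ A) :
    JoinedBy (SimpleGraph.cycleGraph 6) A 0 3 := by
  refine .of_forall_eq fun c hc h u hu => ?_
  have hsucc := hc.eq_add_one
  fin_cases u
  · rfl
  · exact (hsucc 0 h₀ hu).symm
  · exact (hsucc 2 hu h₃).trans h.symm
  · exact h.symm
  · exact absurd hu h₄
  · exact absurd hu h₅

variable {z : ℂ} {A : Set (Fin 6)}

lemma exists_joinedBy_hexagon (hz : 1 ≤ ‖z‖) (hdrop : ∀ k, hexForm z k < -1 / 4 → k ∈ A)
    (hrise : ∀ k ∈ A, hexForm z k ≤ 1 / 4) :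
    ∃ k ∈ A, JoinedBy (SimpleGraph.cycleGraph 6) A k k := by
  obtain ⟨k, h₀, h₁⟩ := exists_hexForm_lt hz
  refine ⟨k, hdrop k h₀, joinedBy_hexagon (hdrop k h₀) (hdrop _ h₁) (fun h₃ => ?_) fun h₄ => ?_⟩
  · linarith [hrise _ h₃, hexForm_add_three z k]
  · rw [show k + 4 = k + 1 + 3 by rw [add_assoc]; rfl] at h₄
    linarith [hrise _ h₄, hexForm_add_three z (k + 1)]

lemma half_lt_abs_re (hz : 1 ≤ ‖z‖) (him : |z.im| ≤ 1 / 4) : 1 / 2 < |z.re| := by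
  by_contra! hre
  linarith [one_le_sq_add_sq hz, sq_le_sq' (abs_le.1 him).1 (abs_le.1 him).2,
    sq_le_sq' (abs_le.1 hre).1 (abs_le.1 hre).2]

section Boundary

variable (hz : 1 ≤ ‖z‖) (hdrop : ∀ k ≤ 3, hexForm z k < -1 / 4 → k ∈ A)
  (hrise : ∀ k ∈ A, hexForm z k ≤ 1 / 4)

include hdrop hrise in
lemma abs_im_le_of_iff (h : 0 ∈ A ↔ 3 ∈ A) : |z.im| ≤ 1 / 4 := by
  have h₀ := hexForm_zero z
  have h₃ := hexForm_three z
  by_cases hA : 0 ∈ A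
  · exact abs_le.2 ⟨by linarith [hrise 3 (h.1 hA)], by linarith [hrise 0 hA]⟩
  · have hlt₀ := mt (hdrop 0 (by decide)) hA
    have hlt₃ := mt (hdrop 3 le_rfl) (mt h.2 hA)
    exact abs_le.2 ⟨by linarith, by linarith⟩

include hz hdrop hrise

lemma one_two_notMem_of_iff (h : 0 ∈ A ↔ 3 ∈ A) (hre : 0 < z.re) : 1 ∉ A ∧ 2 ∉ A := by
  have him := abs_im_le_of_iff hdrop hrise h
  have hlt := half_lt_abs_re hz him
  rw [abs_of_pos hre] at hlt
  exact ⟨fun h₁ => by linarith [hrise 1 h₁, hexForm_one z, neg_le_of_abs_le him],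
    fun h₂ => by linarith [hrise 2 h₂, hexForm_two z]⟩

lemma one_two_mem_of_iff (h : 0 ∈ A ↔ 3 ∈ A) (hre : z.re ≤ 0) : 1 ∈ A ∧ 2 ∈ A := by
  have him := abs_im_le_of_iff hdrop hrise h
  have hlt := half_lt_abs_re hz him
  rw [abs_of_nonpos hre] at hlt
  exact ⟨hdrop 1 (by decide) (by linarith [hexForm_one z, le_of_abs_le him]),
    hdrop 2 (by decide) (by linarith [hexForm_two z])⟩

lemma two_notMem_of_zero_mem (h₀ : 0 ∈ A) (h₁ : 1 ∉ A) : 2 ∉ A := by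
  intro h₂
  have hx := hrise 0 h₀
  have hy := hrise 2 h₂
  have hxy := mt (hdrop 1 (by decide)) h₁
  rw [hexForm_zero] at hx
  rw [hexForm_two] at hy
  rw [hexForm_one, not_lt] at hxy
  nlinarith [one_le_sq_add_sq hz]

lemma one_notMem_of_three_mem (h₃ : 3 ∈ A) (h₂ : 2 ∉ A) : 1 ∉ A := by
  intro h₁
  have hx := hrise 3 h₃
  have hxy := hrise 1 h₁
  have hy := mt (hdrop 2 (by decide)) h₂
  rw [hexForm_three] at hx
  rw [hexForm_two, not_lt] at hy
  rw [hexForm_one] at hxy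
  nlinarith [one_le_sq_add_sq hz]

variable (h₄ : 4 ∉ A) (h₅ : 5 ∉ A)
include h₄ h₅

lemma hexagon_boundary_eq_empty (h₀ : 0 ∉ A) (h₃ : 3 ∉ A) (hre : 0 < z.re) : A = ∅ := by
  obtain ⟨h₁, h₂⟩ := one_two_notMem_of_iff hz hdrop hrise (iff_of_false h₀ h₃) hre
  refine eq_empty_of_forall_notMem fun k => ?_
  fin_cases k <;> assumption

lemma exists_joinedBy_hexagon_boundary (h : 0 < z.re → ¬(0 ∈ A ↔ 3 ∈ A)) :
    ∃ k ∈ A, JoinedBy (SimpleGraph.cycleGraph 6) A k k := by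
  by_cases hiff : 0 ∈ A ↔ 3 ∈ A
  · obtain ⟨h₁, h₂⟩ := one_two_mem_of_iff hz hdrop hrise hiff
      (not_lt.1 fun hre => h hre hiff)
    exact ⟨1, h₁, joinedBy_hexagon h₁ h₂ h₄ h₅⟩
  by_cases h₀ : 0 ∈ A
  · have h₃ : 3 ∉ A := fun h₃ => hiff (iff_of_true h₀ h₃)
    by_cases h₁ : 1 ∈ A
    · exact ⟨0, h₀, joinedBy_hexagon h₀ h₁ h₃ h₄⟩
    have h₂ := two_notMem_of_zero_mem hz hdrop hrise h₀ h₁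
    refine ⟨0, h₀, .of_forall_eq fun c _ _ u hu => ?_⟩
    fin_cases u <;> first | rfl | contradiction
  · have h₃ : 3 ∈ A := by tauto
    by_cases h₂ : 2 ∈ A
    · exact ⟨2, h₂, joinedBy_hexagon h₂ h₃ h₅ h₀⟩
    have h₁ := one_notMem_of_three_mem hz hdrop hrise h₃ h₂
    refine ⟨3, h₃, .of_forall_eq fun c _ _ u hu => ?_⟩
    fin_cases u <;> first | rfl | contradiction

end Boundary

end HexLink

section GridSample

variable {N : ℕ}

lemma eq_of_forall_add_one_eq [NeZero N] {c : ZMod N → ℝ} (hc : ∀ i, c i = c (i + 1))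
    (i : ZMod N) : c i = c 0 := by
  have hnat (n : ℕ) : c n = c 0 := by
    induction n with
    | zero => rw [Nat.cast_zero]
    | succ n ih => rw [Nat.cast_succ, ← hc, ih]
  rw [← ZMod.natCast_zmod_val i, hnat]

lemma joinedBy_rows [NeZero N] [Nontrivial (ZMod N)] (j : ℤ) (z : ℤ × ZMod N)
    (hz : 0 ≤ z.1 ∧ z.1 ≤ j) : JoinedBy (cylinderGrid N) {v | 0 ≤ v.1 ∧ v.1 ≤ j} z z := by
  intro c hc _
  have hrow (i : ZMod N) (s : ℤ) (hs : 0 ≤ s) (hsj : s ≤ j) : c (s, i) = c (0, i) := by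
    induction s, hs using Int.leInduction with
    | base => rfl
    | succ s hs ih =>
      have hadj := cylinderGrid_adj_nbr (s, i) 2
      have hnbr : nbr (s, i) 2 = (s + 1, i) := by simp [nbr, hexStep]
      rw [hnbr] at hadj
      rw [← ih (by lia)]
      exact hc _ ⟨by lia, hsj⟩ _ ⟨hs, by lia⟩ hadj.symm
  have hcol (i : ZMod N) : c (0, i) = c (0, i + 1) := by
    have hadj := cylinderGrid_adj_nbr (0, i) 0
    have hnbr : nbr (0, i) 0 = (0, i + 1) := by simp [nbr, hexStep]
    rw [hnbr] at hadj
    exact hc _ ⟨le_rfl, by lia⟩ _ ⟨le_rfl, by lia⟩ hadj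
  have hconst : ∀ v ∈ {v : ℤ × ZMod N | 0 ≤ v.1 ∧ v.1 ≤ j}, c v = c (0, 0) := fun v hv =>
    (hrow v.2 v.1 hv.1 hv.2).trans (eq_of_forall_add_one_eq (c := fun i => c (0, i)) hcol v.2)
  exact fun u hu v hv => (hconst u hu).trans (hconst v hv).symm

/-- Values `P` and gradients `g` at the vertices of a triangulated grid of mesh `δ`, the rows
`v.1 < 0` being ignored. First-order expansion holds along the edges, up to an error small
compared with the gradient, as long as `P v` can be between `-M` and `C - δ v.1 / 16`. -/
structure IsGridSample (P : ℤ × ZMod N → ℝ) (g : ℤ × ZMod N → ℂ) (δ M C : ℝ) : Prop where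
  mesh_pos : 0 < δ
  one_le_norm : ∀ v, 0 ≤ v.1 → 1 ≤ ‖g v‖
  abs_sub_le : ∀ v, 0 ≤ v.1 → δ * v.1 ≤ 16 * (C + M) → ∀ k,
    |P (nbr v k) - P v - δ * hexForm (g v) k| ≤ δ / 8

open Classical in
/-- The values `P` of a grid sample, tilted by a slope too small to reverse a definite rise or drop
along an edge, flattened below the level `-M` and raised above `C` in the rows `v.1 < 0`. The tilt
makes the part below `C` finite. -/
def tiltedHeight (P : ℤ × ZMod N → ℝ) (δ M C : ℝ) (v : ℤ × ZMod N) : ℝ :=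
  if v.1 < 0 then C + 1 else if P v < -M then -M - 1 else P v + δ * v.1 / 16

/-- The tilted height, with ties broken arbitrarily. -/
def gridHeight (P : ℤ × ZMod N → ℝ) (δ M C : ℝ) (v : ℤ × ZMod N) : ℝ ×ₗ ℤ ×ₗ ℕ :=
  toLex (tiltedHeight P δ M C v, toLex (v.1, v.2.val))

/-- The vertices of a grid sample at which the tilted height is between `-M` and `C`. -/
def activeSet (P : ℤ × ZMod N → ℝ) (δ M C : ℝ) : Set (ℤ × ZMod N) :=
  {v | 0 ≤ v.1 ∧ -M ≤ P v ∧ P v + δ * v.1 / 16 ≤ C}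

/-- The vertices of a grid sample with value below `-M`. -/
def lowSet (P : ℤ × ZMod N → ℝ) (M : ℝ) : Set (ℤ × ZMod N) := {v | 0 ≤ v.1 ∧ P v < -M}

variable {P : ℤ × ZMod N → ℝ} {g : ℤ × ZMod N → ℂ} {δ M C : ℝ} {u v : ℤ × ZMod N} {k : Fin 6}

lemma gridHeight_injective [NeZero N] (P : ℤ × ZMod N → ℝ) (δ M C : ℝ) :
    Function.Injective (gridHeight P δ M C) := fun u v huv => by
  have h : (u.1, u.2.val) = (v.1, v.2.val) := congrArg Prod.snd huv
  rw [Prod.mk.injEq] at h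
  exact Prod.ext h.1 (ZMod.val_injective N h.2)

lemma gridHeight_lt (h : tiltedHeight P δ M C u < tiltedHeight P δ M C v) :
    gridHeight P δ M C u < gridHeight P δ M C v :=
  Prod.Lex.toLex_lt_toLex.2 (.inl h)

lemma tiltedHeight_le (h : gridHeight P δ M C u ≤ gridHeight P δ M C v) :
    tiltedHeight P δ M C u ≤ tiltedHeight P δ M C v :=
  (Prod.Lex.toLex_le_toLex'.1 h).1

lemma tiltedHeight_of_neg (hv : v.1 < 0) : tiltedHeight P δ M C v = C + 1 := if_pos hv

lemma tiltedHeight_of_mem_lowSet (hv : v ∈ lowSet P M) : tiltedHeight P δ M C v = -M - 1 := by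
  rw [tiltedHeight, if_neg hv.1.not_gt, if_pos hv.2]

lemma tiltedHeight_eq (h₀ : 0 ≤ v.1) (hM : -M ≤ P v) :
    tiltedHeight P δ M C v = P v + δ * v.1 / 16 := by
  rw [tiltedHeight, if_neg h₀.not_gt, if_neg hM.not_gt]

lemma mul_row_le_of_mem_activeSet (hv : v ∈ activeSet P δ M C) : δ * v.1 ≤ 16 * (C + M) := by
  linarith [hv.2.1, hv.2.2]

lemma finite_activeSet [NeZero N] (P : ℤ × ZMod N → ℝ) (M C : ℝ) (hδ : 0 < δ) :
    (activeSet P δ M C).Finite := by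
  refine ((finite_Icc 0 ⌊16 * (C + M) / δ⌋).prod finite_univ).subset fun v hv => ?_
  refine ⟨⟨hv.1, Int.le_floor.2 ?_⟩, trivial⟩
  rw [le_div_iff₀' hδ]
  exact mul_row_le_of_mem_activeSet hv

lemma le_tiltedHeight (hδ : 0 < δ) (hv : v ∈ activeSet P δ M C) :
    -M ≤ tiltedHeight P δ M C v := by
  have h₀ : (0 : ℝ) ≤ v.1 := Int.cast_nonneg hv.1
  rw [tiltedHeight_eq hv.1 hv.2.1]
  linarith [hv.2.1, mul_nonneg hδ.le h₀]

lemma tiltedHeight_le_of_mem_activeSet (hv : v ∈ activeSet P δ M C) :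
    tiltedHeight P δ M C v ≤ C := (tiltedHeight_eq hv.1 hv.2.1).trans_le hv.2.2

lemma mem_activeSet_union_lowSet (hv : v ∈ activeSet P δ M C)
    (huv : gridHeight P δ M C u ≤ gridHeight P δ M C v) : u ∈ activeSet P δ M C ∪ lowSet P M := by
  have hC := (tiltedHeight_le huv).trans (tiltedHeight_le_of_mem_activeSet hv)
  have h₀ : 0 ≤ u.1 := by
    by_contra! h
    rw [tiltedHeight_of_neg h] at hC
    linarith
  rcases lt_or_ge (P u) (-M) with hM | hM
  · exact .inr ⟨h₀, hM⟩
  · exact .inl ⟨h₀, hM, (tiltedHeight_eq h₀ hM).symm.trans_le hC⟩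

lemma hexStep_fst_le : ∀ k, (hexStep k).1 ≤ 1 := by decide

lemma neg_one_le_hexStep_fst : ∀ k, -1 ≤ (hexStep k).1 := by decide

lemma nbr_fst_nonneg (hv : 0 < v.1) (k : Fin 6) : 0 ≤ (nbr v k).1 := by
  have := neg_one_le_hexStep_fst k
  simp only [nbr]
  lia

lemma nbr_row_zero_fst_nonneg_iff {i : ZMod N} : 0 ≤ (nbr (0, i) k).1 ↔ k ≤ 3 := by
  have h : ∀ k, 0 ≤ 0 + (hexStep k).1 ↔ k ≤ 3 := by decide
  exact h k

namespace IsGridSample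

lemma gridHeight_nbr_lt (H : IsGridSample P g δ M C) (hv : v ∈ activeSet P δ M C)
    (hu : 0 ≤ (nbr v k).1) (hk : hexForm (g v) k < -1 / 4) :
    gridHeight P δ M C (nbr v k) < gridHeight P δ M C v := by
  refine gridHeight_lt ?_
  rcases lt_or_ge (P (nbr v k)) (-M) with hM | hM
  · rw [tiltedHeight_of_mem_lowSet ⟨hu, hM⟩]
    linarith [le_tiltedHeight H.mesh_pos hv]
  rw [tiltedHeight_eq hu hM, tiltedHeight_eq hv.1 hv.2.1]
  have hdrop := (abs_le.1 (H.abs_sub_le v hv.1 (mul_row_le_of_mem_activeSet hv) k)).2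
  have hrow : ((nbr v k).1 : ℝ) ≤ v.1 + 1 := mod_cast add_le_add_right (hexStep_fst_le k) v.1
  nlinarith [H.mesh_pos]

lemma hexForm_le_of_gridHeight_nbr_lt (H : IsGridSample P g δ M C) (hv : v ∈ activeSet P δ M C)
    (huv : gridHeight P δ M C (nbr v k) < gridHeight P δ M C v) : hexForm (g v) k ≤ 1 / 4 := by
  by_contra! hk
  have hrise := (abs_le.1 (H.abs_sub_le v hv.1 (mul_row_le_of_mem_activeSet hv) k)).1
  have hP : P v + δ / 8 < P (nbr v k) := by nlinarith [H.mesh_pos]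
  have hM : -M ≤ P (nbr v k) := by linarith [hv.2.1, H.mesh_pos]
  have hu : 0 ≤ (nbr v k).1 := (mem_activeSet_union_lowSet hv huv.le).elim And.left And.left
  have hle := tiltedHeight_le huv.le
  rw [tiltedHeight_eq hu hM, tiltedHeight_eq hv.1 hv.2.1] at hle
  have hrow : (v.1 : ℝ) - 1 ≤ (nbr v k).1 :=
    mod_cast add_le_add_right (neg_one_le_hexStep_fst k) v.1
  nlinarith [H.mesh_pos]

lemma exists_joinedBy_lowerLink [Nontrivial (ZMod N)] (H : IsGridSample P g δ M C)
    (hv : v ∈ activeSet P δ M C) (hrow : 0 < v.1) :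
    ∃ u ∈ lowerLink (cylinderGrid N) (gridHeight P δ M C) v,
      JoinedBy (cylinderGrid N) (lowerLink (cylinderGrid N) (gridHeight P δ M C) v) u u := by
  rw [lowerLink_cylinderGrid]
  obtain ⟨k, hk, hjoin⟩ := exists_joinedBy_hexagon (H.one_le_norm v hv.1)
    (fun k hk => H.gridHeight_nbr_lt hv (nbr_fst_nonneg hrow k) hk)
    (fun k hk => H.hexForm_le_of_gridHeight_nbr_lt hv hk)
  exact ⟨_, mem_image_of_mem _ hk, hjoin.image _⟩

end IsGridSample

/-- The row `v.1 = 0` rises from column `i` to column `i + 1`. -/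
def RowRises (P : ℤ × ZMod N → ℝ) (δ M C : ℝ) (i : ZMod N) : Prop :=
  gridHeight P δ M C (0, i) < gridHeight P δ M C (0, i + 1)

open Classical in
/-- The columns satisfying `pos` at which a cyclic sequence turns from falling to rising. -/
def upTurns [NeZero N] (up pos : ZMod N → Prop) : Finset (ZMod N) :=
  {i | ¬up (i - 1) ∧ up i ∧ pos i}

open Classical in
/-- The columns satisfying `pos` at which a cyclic sequence turns from rising to falling. -/
def downTurns [NeZero N] (up pos : ZMod N → Prop) : Finset (ZMod N) :=
  {i | up (i - 1) ∧ ¬up i ∧ pos i}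

lemma mem_upTurns [NeZero N] {up pos : ZMod N → Prop} {i : ZMod N} :
    i ∈ upTurns up pos ↔ ¬up (i - 1) ∧ up i ∧ pos i := by
  classical exact Finset.mem_filter_univ i

lemma mem_downTurns [NeZero N] {up pos : ZMod N → Prop} {i : ZMod N} :
    i ∈ downTurns up pos ↔ up (i - 1) ∧ ¬up i ∧ pos i := by
  classical exact Finset.mem_filter_univ i

lemma le_of_gridHeight_row_zero_le {i j : ZMod N} (hM : ∀ i, -M ≤ P (0, i))
    (hij : gridHeight P δ M C (0, i) ≤ gridHeight P δ M C (0, j)) : P (0, i) ≤ P (0, j) := by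
  have h := tiltedHeight_le hij
  rw [tiltedHeight_eq le_rfl (hM i), tiltedHeight_eq le_rfl (hM j)] at h
  exact (add_le_add_iff_right _).1 h

lemma gridHeight_nbr_zero_lt [NeZero N] [Nontrivial (ZMod N)] (i : ZMod N) :
    gridHeight P δ M C (nbr (0, i) 0) < gridHeight P δ M C (0, i) ↔ ¬RowRises P δ M C i := by
  have hne := (gridHeight_injective P δ M C).ne (nbr_ne_self (0, i) 0)
  have hnbr : nbr (0, i) 0 = (0, i + 1) := by simp [nbr, hexStep]
  rw [RowRises, ← hnbr, not_lt, le_iff_lt_or_eq, or_iff_left hne]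

lemma gridHeight_nbr_three_lt (i : ZMod N) :
    gridHeight P δ M C (nbr (0, i) 3) < gridHeight P δ M C (0, i) ↔ RowRises P δ M C (i - 1) := by
  have hnbr : nbr (0, i) 3 = (0, i - 1) := by simp [nbr, hexStep, sub_eq_add_neg]
  rw [RowRises, hnbr, sub_add_cancel]

lemma notMem_of_row_zero {i : ZMod N} (hi : (0, i) ∈ activeSet P δ M C) (hk : ¬k ≤ 3) :
    k ∉ lowerDirs (gridHeight P δ M C) (0, i) := fun h =>
  hk (nbr_row_zero_fst_nonneg_iff.1
    ((mem_activeSet_union_lowSet hi (le_of_lt h)).elim And.left And.left))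

namespace IsGridSample

lemma abs_sub_row_zero_le (H : IsGridSample P g δ M C) (hCM : 0 ≤ C + M) (i : ZMod N) :
    |P (0, i + 1) - P (0, i) - δ * (g (0, i)).im| ≤ δ / 8 := by
  simpa [nbr, hexStep, hexForm] using H.abs_sub_le (0, i) le_rfl (by simpa using hCM) 0

lemma neg_le_im_of_rowRises (H : IsGridSample P g δ M C) (hM : ∀ i, -M ≤ P (0, i))
    (hCM : 0 ≤ C + M) {i : ZMod N} (hi : RowRises P δ M C i) : -1 / 8 ≤ (g (0, i)).im := by
  have hle := le_of_gridHeight_row_zero_le hM hi.le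
  have h := (abs_le.1 (H.abs_sub_row_zero_le hCM i)).2
  by_contra!
  nlinarith [H.mesh_pos]

lemma im_le_of_not_rowRises (H : IsGridSample P g δ M C) (hM : ∀ i, -M ≤ P (0, i))
    (hCM : 0 ≤ C + M) {i : ZMod N} (hi : ¬RowRises P δ M C i) : (g (0, i)).im ≤ 1 / 8 := by
  have hle := le_of_gridHeight_row_zero_le hM (not_lt.1 hi)
  have h := (abs_le.1 (H.abs_sub_row_zero_le hCM i)).1
  by_contra!
  nlinarith [H.mesh_pos]

end IsGridSample

namespace IsGridSample

variable [NeZero N] [Nontrivial (ZMod N)] {i : ZMod N}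

lemma lowerLink_eq_empty (H : IsGridSample P g δ M C) (hi : (0, i) ∈ activeSet P δ M C)
    (hprev : ¬RowRises P δ M C (i - 1)) (hnext : RowRises P δ M C i) (hre : 0 < (g (0, i)).re) :
    lowerLink (cylinderGrid N) (gridHeight P δ M C) (0, i) = ∅ := by
  rw [lowerLink_cylinderGrid, image_eq_empty]
  exact hexagon_boundary_eq_empty (H.one_le_norm _ hi.1)
    (fun k hk => H.gridHeight_nbr_lt hi (nbr_row_zero_fst_nonneg_iff.2 hk))
    (fun k hk => H.hexForm_le_of_gridHeight_nbr_lt hi hk)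
    (notMem_of_row_zero hi (by decide)) (notMem_of_row_zero hi (by decide))
    (fun h => (gridHeight_nbr_zero_lt i).1 h hnext)
    (fun h => hprev ((gridHeight_nbr_three_lt i).1 h)) hre

lemma exists_joinedBy_lowerLink_of_row_zero (H : IsGridSample P g δ M C)
    (hi : (0, i) ∈ activeSet P δ M C)
    (hre : 0 < (g (0, i)).re → (RowRises P δ M C (i - 1) ↔ RowRises P δ M C i)) :
    ∃ u ∈ lowerLink (cylinderGrid N) (gridHeight P δ M C) (0, i),
      JoinedBy (cylinderGrid N) (lowerLink (cylinderGrid N) (gridHeight P δ M C) (0, i)) u u := by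
  rw [lowerLink_cylinderGrid]
  obtain ⟨k, hk, hjoin⟩ := exists_joinedBy_hexagon_boundary
    (A := lowerDirs (gridHeight P δ M C) (0, i)) (H.one_le_norm _ hi.1)
    (fun k hk => H.gridHeight_nbr_lt hi (nbr_row_zero_fst_nonneg_iff.2 hk))
    (fun k hk => H.hexForm_le_of_gridHeight_nbr_lt hi hk)
    (notMem_of_row_zero hi (by decide)) (notMem_of_row_zero hi (by decide))
    (fun h => by
      rw [mem_lowerDirs, mem_lowerDirs, gridHeight_nbr_zero_lt, gridHeight_nbr_three_lt, hre h]
      exact not_iff_self)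
  exact ⟨_, mem_image_of_mem _ hk, hjoin.image _⟩

lemma joinedBy_lowerLink_of_row_zero (hi : (0, i) ∈ activeSet P δ M C)
    (hprev : RowRises P δ M C (i - 1)) (hnext : ¬RowRises P δ M C i) :
    ∃ u₁ ∈ lowerLink (cylinderGrid N) (gridHeight P δ M C) (0, i), ∃ u₂,
      JoinedBy (cylinderGrid N) (lowerLink (cylinderGrid N) (gridHeight P δ M C) (0, i)) u₁ u₂ := by
  rw [lowerLink_cylinderGrid]
  have h₀ := (gridHeight_nbr_zero_lt i).2 hnext
  exact ⟨_, mem_image_of_mem _ h₀, _, (joinedBy_hexagon_boundary h₀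
    ((gridHeight_nbr_three_lt i).2 hprev) (notMem_of_row_zero hi (by decide))
    (notMem_of_row_zero hi (by decide))).image _⟩

lemma isDiscreteMorse (H : IsGridSample P g δ M C)
    (hrow : ∀ i : ZMod N, (0, i) ∈ activeSet P δ M C) :
    IsDiscreteMorse (cylinderGrid N) (gridHeight P δ M C)
      (finite_activeSet P M C H.mesh_pos).toFinset (lowSet P M)
      ((upTurns (RowRises P δ M C) fun i => 0 < (g (0, i)).re).map (.sectR 0 _))
      ((downTurns (RowRises P δ M C) fun i => 0 < (g (0, i)).re).map (.sectR 0 _)) where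
  injective := gridHeight_injective P δ M C
  low_lt u hu v hv := gridHeight_lt (by
    rw [tiltedHeight_of_mem_lowSet hu]
    linarith [le_tiltedHeight H.mesh_pos ((Finite.mem_toFinset _).1 hv)])
  lowerLink_subset v hv u hu := by
    rw [Finite.coe_toFinset]
    exact mem_activeSet_union_lowSet ((Finite.mem_toFinset _).1 hv) hu.2.le
  minima_subset v hv := by
    obtain ⟨i, -, rfl⟩ := Finset.mem_map.1 hv
    exact (Finite.mem_toFinset _).2 (hrow i)
  lowerLink_minimum v hv := by
    obtain ⟨i, hi, rfl⟩ := Finset.mem_map.1 hv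
    obtain ⟨hprev, hnext, hre⟩ := mem_upTurns.1 hi
    exact H.lowerLink_eq_empty (hrow i) hprev hnext hre
  lowerLink_joinedBy v hv hmin := by
    rw [Finite.mem_toFinset] at hv
    rcases hv.1.lt_or_eq with hpos | hzero
    · obtain ⟨u, hu, hjoin⟩ := H.exists_joinedBy_lowerLink hv hpos
      exact ⟨u, hu, u, hjoin, fun _ => rfl⟩
    obtain ⟨_, i⟩ := v
    obtain rfl : 0 = _ := hzero
    by_cases hturn : RowRises P δ M C (i - 1) ∧ ¬RowRises P δ M C i ∧ 0 < (g (0, i)).re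
    · obtain ⟨u₁, hu₁, u₂, hjoin⟩ := joinedBy_lowerLink_of_row_zero hv hturn.1 hturn.2.1
      exact ⟨u₁, hu₁, u₂, hjoin, fun hsaddle => absurd
        (Finset.mem_map_of_mem _ (mem_downTurns.2 hturn)) hsaddle⟩
    have hmin' : ¬(¬RowRises P δ M C (i - 1) ∧ RowRises P δ M C i ∧ 0 < (g (0, i)).re) := fun h =>
      hmin (Finset.mem_map_of_mem _ (mem_upTurns.2 h))
    obtain ⟨u, hu, hjoin⟩ := H.exists_joinedBy_lowerLink_of_row_zero hv fun _ => by tauto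
    exact ⟨u, hu, u, hjoin, fun _ => rfl⟩

theorem card_upTurns_le_card_downTurns (H : IsGridSample P g δ M C) (hM : ∀ i, -M ≤ P (0, i))
    {j : ℤ} (hC : ∀ v, 0 ≤ v.1 → v.1 ≤ j → P v + δ * v.1 / 16 ≤ C) (hj : 0 ≤ j)
    (hlow : ∃ i, P (j, i) < -M) :
    (upTurns (RowRises P δ M C) fun i => 0 < (g (0, i)).re).card ≤
      (downTurns (RowRises P δ M C) fun i => 0 < (g (0, i)).re).card := by
  obtain ⟨i₀, hi₀⟩ := hlow
  have hmorse := H.isDiscreteMorse fun i => ⟨le_rfl, hM i, hC (0, i) le_rfl hj⟩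
  have hcard := hmorse.card_minima_le_card_saddles (A := {v | 0 ≤ v.1 ∧ v.1 ≤ j}) ?_
    (z := (j, i₀)) ⟨hj, le_rfl⟩ ⟨hj, hi₀⟩ (joinedBy_rows j _ ⟨hj, le_rfl⟩) ?_
  · simpa only [Finset.card_map] using hcard
  · rintro v ⟨h₀, hvj⟩
    rcases lt_or_ge (P v) (-M) with hv | hv
    · exact .inr ⟨h₀, hv⟩
    · exact .inl ((Finite.mem_toFinset _).2 ⟨h₀, hv, hC v h₀ hvj⟩)
  · intro v hv
    obtain ⟨i, -, rfl⟩ := Finset.mem_map.1 hv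
    exact ⟨le_rfl, hj⟩

end IsGridSample

end GridSample

section Winding

open Real

lemma exists_abs_sub_int_mul_two_pi_le {x α : ℝ} (hα : α ≤ π) (h₀ : 0 ≤ α) (h : cos α ≤ cos x) :
    ∃ p : ℤ, |x - p * (2 * π)| ≤ α := by
  refine ⟨round (x / (2 * π)), (strictAntiOn_cos.le_iff_ge ⟨h₀, hα⟩ ⟨abs_nonneg _, ?_⟩).1 ?_⟩
  · have := abs_sub_round (x / (2 * π))
    rw [← mul_le_mul_iff_left₀ two_pi_pos, ← abs_of_pos two_pi_pos, ← abs_mul, sub_mul,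
      abs_of_pos two_pi_pos, div_mul_cancel₀ _ two_pi_pos.ne'] at this
    linarith
  · rwa [cos_abs, cos_sub_int_mul_two_pi]

/-- The turn of the circle in which an angle `x` lies, allowing for some overlap: the `p`-th turn
starts with a phase `up` in which `sin x` is not too negative, followed by one in which it is not
too positive. -/
def InTurn (up : Prop) (x : ℝ) (p : ℤ) : Prop :=
  (up → |x - π / 2 - p * (2 * π)| ≤ 2 * π / 3) ∧ (¬up → |x - 3 * π / 2 - p * (2 * π)| ≤ 2 * π / 3)

lemma cos_two_mul_pi_div_three : cos (2 * π / 3) = -1 / 2 := by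
  rw [show 2 * π / 3 = π - π / 3 by ring, cos_pi_sub, cos_pi_div_three]
  norm_num

lemma exists_inTurn {up : Prop} {x : ℝ} (hup : up → -1 / 2 ≤ sin x)
    (hdown : ¬up → sin x ≤ 1 / 2) : ∃ p, InTurn up x p := by
  have hπ := pi_pos
  by_cases h : up
  · obtain ⟨p, hp⟩ := exists_abs_sub_int_mul_two_pi_le (x := x - π / 2) (α := 2 * π / 3)
      (by linarith) (by linarith) (by
        rw [cos_two_mul_pi_div_three, cos_sub_pi_div_two]
        exact hup h)
    exact ⟨p, fun _ => hp, absurd h⟩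
  · obtain ⟨p, hp⟩ := exists_abs_sub_int_mul_two_pi_le (x := x - 3 * π / 2) (α := 2 * π / 3)
      (by linarith) (by linarith) (by
        rw [cos_two_mul_pi_div_three, show x - 3 * π / 2 = x - π / 2 - π by ring, cos_sub_pi,
          cos_sub_pi_div_two]
        linarith [hdown h])
    exact ⟨p, fun h' => absurd h' h, fun _ => hp⟩

namespace InTurn

variable {up up' : Prop} {x x' : ℝ} {p p' : ℤ}

lemma add_int_mul_two_pi (h : InTurn up x p) (w : ℤ) : InTurn up (x + w * (2 * π)) (p + w) := by
  unfold InTurn at h ⊢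
  push_cast
  convert h using 4 <;> ring_nf

lemma eq (h : InTurn up x p) (h' : InTurn up x' p') (hxx' : |x' - x| ≤ π / 6) : p' = p := by
  have key (c : ℝ) (hx : |x - c - p * (2 * π)| ≤ 2 * π / 3)
      (hx' : |x' - c - p' * (2 * π)| ≤ 2 * π / 3) : p' = p := by
    rw [abs_le] at hx hx' hxx'
    have hlt : (p' : ℝ) < p + 1 := by nlinarith [pi_pos]
    have hgt : (p : ℝ) < p' + 1 := by nlinarith [pi_pos]
    norm_cast at hlt hgt
    lia
  by_cases hup : up
  · exact key _ (h.1 hup) (h'.1 hup)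
  · exact key _ (h.2 hup) (h'.2 hup)

lemma sub_eq_of_up_turn (h : InTurn up x p) (h' : InTurn up' x' p') (hxx' : |x' - x| ≤ π / 6)
    (hup : ¬up) (hup' : up') : p' - p = if 0 < cos x' then 1 else 0 := by
  have hπ := pi_pos
  have hx := abs_le.1 (h.2 hup)
  have hx' := abs_le.1 (h'.1 hup')
  rw [abs_le] at hxx'
  have hlt : (p' : ℝ) < p + 2 := by nlinarith [pi_pos]
  have hge : (p : ℝ) < p' + 1 := by nlinarith [pi_pos]
  norm_cast at hlt hge
  rw [← cos_sub_int_mul_two_pi x' p']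
  obtain rfl | rfl : p' = p ∨ p' = p + 1 := by lia
  · rw [if_neg (cos_neg_of_pi_div_two_lt_of_lt (by linarith) (by linarith)).not_gt, sub_self]
  · push_cast at hx' ⊢
    rw [if_pos (cos_pos_of_mem_Ioo ⟨by linarith, by linarith⟩), add_sub_cancel_left]

lemma sub_eq_of_down_turn (h : InTurn up x p) (h' : InTurn up' x' p') (hxx' : |x' - x| ≤ π / 6)
    (hup : up) (hup' : ¬up') : p' - p = if 0 < cos x' then -1 else 0 := by
  have hπ := pi_pos
  have hx := abs_le.1 (h.1 hup)
  have hx' := abs_le.1 (h'.2 hup')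
  rw [abs_le] at hxx'
  have hlt : (p' : ℝ) < p + 1 := by nlinarith [pi_pos]
  have hge : (p : ℝ) < p' + 2 := by nlinarith [pi_pos]
  norm_cast at hlt hge
  rw [← cos_sub_int_mul_two_pi x' p]
  obtain rfl | rfl : p' = p ∨ p = p' + 1 := by lia
  · rw [if_neg (cos_neg_of_pi_div_two_lt_of_lt (by linarith) (by linarith)).not_gt, sub_self]
  · push_cast at hx ⊢
    rw [if_pos (cos_pos_of_mem_Ioo ⟨by linarith, by linarith⟩), sub_add_cancel_left]

open Classical in
lemma sub_eq (h : InTurn up x p) (h' : InTurn up' x' p') (hxx' : |x' - x| ≤ π / 6) :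
    p' - p = (if ¬up ∧ up' ∧ 0 < cos x' then 1 else 0) -
      if up ∧ ¬up' ∧ 0 < cos x' then 1 else 0 := by
  by_cases hup : up <;> by_cases hup' : up'
  · simp [hup, hup', h.eq (by rwa [eq_true hup, ← eq_true hup']) hxx']
  · rw [h.sub_eq_of_down_turn h' hxx' hup hup']
    split_ifs <;> simp_all
  · rw [h.sub_eq_of_up_turn h' hxx' hup hup']
    simp [hup, hup']
  · simp [hup, hup', h.eq (by rwa [eq_false hup, ← eq_false hup']) hxx']

end InTurn

lemma sum_range_succ_natCast {N : ℕ} [NeZero N] (f : ZMod N → ℤ) :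
    ∑ n ∈ Finset.range N, f (n + 1) = ∑ i, f i := by
  rw [← Equiv.sum_comp (Equiv.addRight (1 : ZMod N)) f]
  refine Finset.sum_nbij' (fun n => (n : ZMod N)) ZMod.val (fun _ _ => Finset.mem_univ _)
    (fun i _ => Finset.mem_range.2 i.val_lt)
    (fun n hn => ZMod.val_cast_of_lt (Finset.mem_range.1 hn)) (fun i _ => ZMod.natCast_zmod_val i)
    fun _ _ => rfl

theorem card_upTurns_sub_card_downTurns {N : ℕ} [NeZero N] {up pos : ZMod N → Prop} {η : ℕ → ℝ}
    {w : ℤ} (hstep : ∀ n < N, |η (n + 1) - η n| ≤ π / 6) (hper : η N = η 0 + w * (2 * π))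
    (hup : ∀ n : ℕ, up n → -1 / 2 ≤ sin (η n)) (hdown : ∀ n : ℕ, ¬up n → sin (η n) ≤ 1 / 2)
    (hpos : ∀ n : ℕ, pos n ↔ 0 < cos (η n)) :
    ((upTurns up pos).card : ℤ) - (downTurns up pos).card = w := by
  classical
  have hturn (n : ℕ) : ∃ p, InTurn (up n) (η n) p := exists_inTurn (hup n) (hdown n)
  choose p hp using hturn
  have hpN : p N = p 0 + w := by
    have h := (hp 0).add_int_mul_two_pi w
    rw [← hper, Nat.cast_zero, ← ZMod.natCast_self] at h
    exact h.eq (hp N) (by simpa using by positivity)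
  have hdiff (n : ℕ) (hn : n < N) : p (n + 1) - p n =
      (if (n + 1 : ZMod N) ∈ upTurns up pos then 1 else 0) -
        if (n + 1 : ZMod N) ∈ downTurns up pos then 1 else 0 := by
    have hn' := hp (n + 1)
    have hpos' := hpos (n + 1)
    rw [Nat.cast_succ] at hn' hpos'
    simpa only [mem_upTurns, mem_downTurns, add_sub_cancel_right, hpos'] using
      (hp n).sub_eq hn' (hstep n hn)
  calc
    _ = ∑ i : ZMod N, ((if i ∈ upTurns up pos then (1 : ℤ) else 0) -
        if i ∈ downTurns up pos then 1 else 0) := by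
      simp only [Finset.sum_sub_distrib, Finset.sum_boole, Finset.filter_univ_mem]
    _ = ∑ n ∈ Finset.range N, (p (n + 1) - p n) := by
      rw [← sum_range_succ_natCast]
      exact Finset.sum_congr rfl fun n hn => (hdiff n (Finset.mem_range.1 hn)).symm
    _ = w := by rw [Finset.sum_range_sub, hpN, add_sub_cancel_left]

end Winding

section Cylinder

open Complex

lemma exists_sub_int_mul_two_pi_I_mem {R : ℝ} {z : ℂ} (h₀ : 0 ≤ z.re) (hR : z.re ≤ R) :
    ∃ n : ℤ, z - n * (2 * Real.pi * I) ∈ Icc 0 R ×ℂ Icc 0 (2 * Real.pi) := by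
  obtain ⟨n, hn, -⟩ := existsUnique_sub_zsmul_mem_Ico Real.two_pi_pos z.im 0
  rw [zero_add, zsmul_eq_mul] at hn
  refine ⟨n, mem_reProdIm.2 ?_⟩
  simpa using ⟨⟨h₀, hR⟩, sub_nonneg.1 hn.1, sub_le_iff_le_add.1 hn.2.le⟩

lemma isCompact_fundamentalDomain (R : ℝ) :
    IsCompact (Icc 0 R ×ℂ Icc 0 (2 * Real.pi)) := isCompact_Icc.reProdIm isCompact_Icc

lemma exists_abs_le_of_periodic {Φ : ℂ → ℝ} (hper : Function.Periodic Φ (2 * Real.pi * I))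
    (hΦ : Continuous Φ) (R : ℝ) : ∃ C, ∀ z : ℂ, 0 ≤ z.re → z.re ≤ R → |Φ z| ≤ C := by
  obtain ⟨C, hC⟩ := (isCompact_fundamentalDomain R).exists_bound_of_continuousOn hΦ.continuousOn
  refine ⟨C, fun z h₀ hR => ?_⟩
  obtain ⟨n, hn⟩ := exists_sub_int_mul_two_pi_I_mem h₀ hR
  exact hper.sub_int_mul_eq n ▸ hC _ hn

lemma exists_dist_lt_of_periodic {X : Type*} [PseudoMetricSpace X] {G : ℂ → X}
    (hper : Function.Periodic G (2 * Real.pi * I)) (hG : Continuous G) (R : ℝ) {ε : ℝ}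
    (hε : 0 < ε) :
    ∃ d > 0, ∀ a b : ℂ, 0 ≤ a.re → a.re ≤ R → dist a b < d → dist (G a) (G b) < ε := by
  have hunif := (isCompact_fundamentalDomain R).uniformContinuousAt_of_continuousAt G
    (fun _ _ => hG.continuousAt) (Metric.dist_mem_uniformity hε)
  obtain ⟨d, hd, hdist⟩ := Metric.mem_uniformity_dist.1 hunif
  refine ⟨d, hd, fun a b h₀ hR hab => ?_⟩
  obtain ⟨n, hn⟩ := exists_sub_int_mul_two_pi_I_mem h₀ hR
  rw [← hper.sub_int_mul_eq n, ← hper.sub_int_mul_eq (x := b) n]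
  exact hdist (by rwa [dist_sub_right]) hn

lemma abs_sub_sub_inner_le {E : Type*} [NormedAddCommGroup E] [InnerProductSpace ℝ E]
    [CompleteSpace E] {ψ : E → ℝ} {g : E → E} (hψ : ∀ x, HasGradientAt ψ (g x) x) {a b : E}
    {τ : ℝ} (hτ : ∀ x ∈ segment ℝ a b, ‖g x - g a‖ ≤ τ) :
    |ψ b - ψ a - inner ℝ (g a) (b - a)| ≤ τ * ‖b - a‖ := by
  refine (convex_segment a b).norm_image_sub_le_of_norm_hasFDerivWithin_le' (𝕜 := ℝ)
    (φ := InnerProductSpace.toDual ℝ E (g a))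
    (fun x _ => (hψ x).hasFDerivAt.hasFDerivWithinAt) (fun x hx => ?_)
    (left_mem_segment ℝ a b) (right_mem_segment ℝ a b)
  rw [← map_sub, LinearIsometryEquiv.norm_map]
  exact hτ x hx

/-- A function `Φ` on the cylinder `ℂ / 2πiℤ` with continuous gradient `G`, which has norm at least
`1` on the half `0 ≤ re z`. -/
structure IsCylinderGradient (Φ : ℂ → ℝ) (G : ℂ → ℂ) : Prop where
  periodic : Function.Periodic Φ (2 * Real.pi * I)
  hasGradientAt : ∀ z, HasGradientAt Φ (G z) z
  continuous_gradient : Continuous G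
  one_le_norm : ∀ z, 0 ≤ z.re → 1 ≤ ‖G z‖

/-- The point of `ℂ` at a vertex of the triangulated square lattice of mesh `δ`. -/
def gridPoint (δ : ℝ) {N : ℕ} (v : ℤ × ZMod N) : ℂ := δ * (v.1 + v.2.val * I)

section GridPoint

variable {N : ℕ} {δ : ℝ}

lemma gridPoint_re (v : ℤ × ZMod N) : (gridPoint δ v).re = δ * v.1 := by
  simp [gridPoint, -ZMod.natCast_val]

variable [NeZero N]

lemma periodic_gridPoint {X : Type*} {F : ℂ → X} (hF : Function.Periodic F (2 * Real.pi * I))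
    (hδ : δ * N = 2 * Real.pi) (a b : ℤ) :
    F (gridPoint δ (a, (b : ZMod N))) = F (δ * (a + b * I)) := by
  obtain ⟨m, hm⟩ : (N : ℤ) ∣ b - (b : ZMod N).val := by
    rw [← ZMod.intCast_zmod_eq_zero_iff_dvd]
    simp
  rw [← hF.sub_int_mul_eq (x := δ * (a + b * I)) m]
  congr 1
  have hb : (b : ℂ) = (b : ZMod N).val + N * m := mod_cast sub_eq_iff_eq_add'.1 hm
  have hδ' : (δ * N : ℂ) = 2 * Real.pi := mod_cast hδ
  rw [gridPoint, hb]
  linear_combination (-(m : ℂ) * I) * hδ'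

lemma periodic_gridPoint_nbr {X : Type*} {F : ℂ → X} (hF : Function.Periodic F (2 * Real.pi * I))
    (hδ : δ * N = 2 * Real.pi) (v : ℤ × ZMod N) (k : Fin 6) :
    F (gridPoint δ (nbr v k)) =
      F (gridPoint δ v + δ * ((hexStep k).1 + (hexStep k).2 * I)) := by
  have hnbr : nbr v k = (v.1 + (hexStep k).1, ((v.2.val + (hexStep k).2 : ℤ) : ZMod N)) := by
    simp [nbr]
  rw [hnbr, periodic_gridPoint hF hδ, gridPoint]
  push_cast
  ring_nf

lemma norm_hexStep_le (k : Fin 6) : ‖((hexStep k).1 + (hexStep k).2 * I : ℂ)‖ ≤ 2 := by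
  have hcoord : ∀ k, |(hexStep k).1| ≤ 1 ∧ |(hexStep k).2| ≤ 1 := by decide
  have h₁ : |((hexStep k).1 : ℝ)| ≤ 1 := mod_cast (hcoord k).1
  have h₂ : |((hexStep k).2 : ℝ)| ≤ 1 := mod_cast (hcoord k).2
  have h := norm_le_abs_re_add_abs_im ((hexStep k).1 + (hexStep k).2 * I : ℂ)
  simp only [add_re, add_im, mul_re, mul_im, intCast_re, intCast_im, I_re, I_im] at h
  ring_nf at h
  linarith

lemma inner_eq_hexForm (z : ℂ) (k : Fin 6) :
    inner ℝ z (δ * ((hexStep k).1 + (hexStep k).2 * I)) = δ * hexForm z k := by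
  simp [inner, hexForm]
  ring

namespace IsCylinderGradient

variable {Φ : ℂ → ℝ} {G : ℂ → ℂ} {M C : ℝ}

lemma continuous (H : IsCylinderGradient Φ G) : Continuous Φ :=
  continuous_iff_continuousAt.2 fun z => (H.hasGradientAt z).continuousAt

lemma periodic_gradient (H : IsCylinderGradient Φ G) :
    Function.Periodic G (2 * Real.pi * I) := fun z => by
  have h := (hasFDerivAt_comp_add_right _).2 (H.hasGradientAt (z + 2 * Real.pi * I)).hasFDerivAt
  rw [funext H.periodic] at h
  exact HasGradientAt.unique h (H.hasGradientAt z)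

lemma isGridSample (H : IsCylinderGradient Φ G) (hδ : 0 < δ) (hN : δ * N = 2 * Real.pi)
    (hG : ∀ a b : ℂ, 0 ≤ a.re → a.re ≤ 16 * (C + M) → dist a b ≤ 2 * δ →
      dist (G a) (G b) ≤ 1 / 16) :
    IsGridSample (N := N) (Φ ∘ gridPoint δ) (G ∘ gridPoint δ) δ M C where
  mesh_pos := hδ
  one_le_norm v hv := H.one_le_norm _ (by rw [gridPoint_re]; positivity)
  abs_sub_le v hv hvC k := by
    have hv₀ : 0 ≤ (gridPoint δ v).re := by rw [gridPoint_re]; positivity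
    have hvC' : (gridPoint δ v).re ≤ 16 * (C + M) := by rwa [gridPoint_re]
    have hstep : ‖(δ * ((hexStep k).1 + (hexStep k).2 * I) : ℂ)‖ ≤ 2 * δ := by
      rw [norm_mul, norm_real, Real.norm_of_nonneg hδ.le, mul_comm]
      gcongr
      exact norm_hexStep_le k
    have h := abs_sub_sub_inner_le H.hasGradientAt (a := gridPoint δ v)
      (b := gridPoint δ v + δ * ((hexStep k).1 + (hexStep k).2 * I)) (τ := 1 / 16) fun x hx => by
        rw [← dist_eq_norm, dist_comm]
        refine hG _ _ hv₀ hvC' ?_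
        rw [dist_eq_norm']
        exact (norm_sub_le_of_mem_segment hx).trans (by rwa [add_sub_cancel_left])
    rw [add_sub_cancel_left, inner_eq_hexForm] at h
    rw [Function.comp_apply, periodic_gridPoint_nbr H.periodic hN]
    exact h.trans (by linarith)

lemma card_upTurns_sub_card_downTurns (H : IsCylinderGradient Φ G)
    (hN : δ * N = 2 * Real.pi)
    (hsample : IsGridSample (N := N) (Φ ∘ gridPoint δ) (G ∘ gridPoint δ) δ M C)
    (hM : ∀ i : ZMod N, -M ≤ Φ (gridPoint δ (0, i))) (hCM : 0 ≤ C + M) {κ : ℝ → ℂ} {w : ℤ}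
    (hκG : ∀ θ : ℝ, exp (κ θ) = G (θ * I)) (hw : κ (2 * Real.pi) = κ 0 + w * (2 * Real.pi * I))
    (hκ : ∀ n < N, |(κ (δ * (n + 1))).im - (κ (δ * n)).im| ≤ Real.pi / 6) :
    ((upTurns (RowRises (Φ ∘ gridPoint δ) δ M C) fun i : ZMod N =>
        0 < (G (gridPoint δ (0, i))).re).card : ℤ) -
      (downTurns (RowRises (Φ ∘ gridPoint δ) δ M C) fun i : ZMod N =>
        0 < (G (gridPoint δ (0, i))).re).card = w := by
  have hG (n : ℕ) : G (gridPoint δ (0, (n : ZMod N))) = exp (κ (δ * n)) := by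
    have h := periodic_gridPoint (N := N) H.periodic_gradient hN 0 n
    rw [Int.cast_natCast] at h
    rw [h, hκG]
    push_cast
    ring_nf
  have hexp (n : ℕ) : 1 ≤ Real.exp (κ (δ * n)).re := by
    rw [← norm_exp, ← hG]
    exact H.one_le_norm _ (by simp [gridPoint_re])
  refine _root_.card_upTurns_sub_card_downTurns (η := fun n => (κ (δ * n)).im)
    (fun n hn => mod_cast hκ n hn) ?_ (fun n hn => ?_) (fun n hn => ?_) fun n => ?_
  · rw [hN, hw]
    simp
  · have him := hsample.neg_le_im_of_rowRises hM hCM hn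
    rw [Function.comp_apply, hG, exp_im] at him
    by_contra!
    nlinarith [hexp n]
  · have him := hsample.im_le_of_not_rowRises hM hCM hn
    rw [Function.comp_apply, hG, exp_im] at him
    by_contra!
    nlinarith [hexp n]
  · rw [hG, exp_re, mul_pos_iff_of_pos_left (Real.exp_pos _)]

lemma winding_nonpos_of_isGridSample [Nontrivial (ZMod N)] (H : IsCylinderGradient Φ G)
    (hN : δ * N = 2 * Real.pi)
    (hsample : IsGridSample (N := N) (Φ ∘ gridPoint δ) (G ∘ gridPoint δ) δ M C)
    (hM : ∀ i : ZMod N, -M ≤ Φ (gridPoint δ (0, i))) {j : ℤ} (hj : 0 ≤ j)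
    (hC : ∀ v : ℤ × ZMod N, 0 ≤ v.1 → v.1 ≤ j → Φ (gridPoint δ v) + δ * v.1 / 16 ≤ C)
    (hlow : ∃ i : ZMod N, Φ (gridPoint δ (j, i)) < -M) {κ : ℝ → ℂ} {w : ℤ}
    (hκG : ∀ θ : ℝ, exp (κ θ) = G (θ * I)) (hw : κ (2 * Real.pi) = κ 0 + w * (2 * Real.pi * I))
    (hκ : ∀ n < N, |(κ (δ * (n + 1))).im - (κ (δ * n)).im| ≤ Real.pi / 6) : w ≤ 0 := by
  have hCM : 0 ≤ C + M := by
    have h := hC (0, 0) le_rfl hj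
    simp only [Int.cast_zero, mul_zero, zero_div, add_zero] at h
    linarith [hM 0]
  rw [← H.card_upTurns_sub_card_downTurns hN hsample hM hCM hκG hw hκ, sub_nonpos, Nat.cast_le]
  exact hsample.card_upTurns_le_card_downTurns hM hC hj hlow

end IsCylinderGradient

lemma exists_gridPoint_lt {Φ : ℂ → ℝ} (hΦ : Function.Periodic Φ (2 * Real.pi * I)) (hδ : 0 < δ)
    (hN : δ * N = 2 * Real.pi) {z : ℂ} (hz : 0 ≤ z.re) {m : ℝ}
    (hm : ∀ y, dist y z ≤ 2 * δ → Φ y < m) :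
    ∃ j : ℤ, 0 ≤ j ∧ δ * j ≤ z.re ∧ ∃ i : ZMod N, Φ (gridPoint δ (j, i)) < m := by
  have hfloor (x : ℝ) : δ * ⌊x / δ⌋ ≤ x ∧ x ≤ δ * ⌊x / δ⌋ + δ := by
    have h := Int.lt_floor_add_one (x / δ)
    rw [div_lt_iff₀' hδ, mul_add, mul_one] at h
    exact ⟨(le_div_iff₀' hδ).1 (Int.floor_le _), h.le⟩
  refine ⟨⌊z.re / δ⌋, Int.floor_nonneg.2 (by positivity), (hfloor _).1, (⌊z.im / δ⌋ : ℤ), ?_⟩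
  rw [periodic_gridPoint hΦ hN]
  refine hm _ ?_
  rw [dist_comm, Complex.dist_eq]
  refine (norm_le_abs_re_add_abs_im _).trans ?_
  have hre := hfloor z.re
  have him := hfloor z.im
  simp only [sub_re, sub_im, add_re, add_im, mul_re, mul_im, ofReal_re, ofReal_im, intCast_re,
    intCast_im, I_re, I_im, mul_zero, zero_mul, mul_one, sub_zero, add_zero, zero_add]
  rw [abs_of_nonneg (by linarith), abs_of_nonneg (by linarith)]
  linarith

end GridPoint

lemma exists_mesh {d : ℝ} (hd : 0 < d) :
    ∃ (N : ℕ) (δ : ℝ), 1 < N ∧ 0 < δ ∧ δ < d ∧ δ * N = 2 * Real.pi := by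
  obtain ⟨N, hN⟩ := exists_nat_gt (max 1 (2 * Real.pi / d))
  rw [max_lt_iff, div_lt_comm₀ hd (by linarith)] at hN
  have hN₀ : (0 : ℝ) < N := by linarith
  exact ⟨N, 2 * Real.pi / N, mod_cast hN.1, by positivity, hN.2, div_mul_cancel₀ _ hN₀.ne'⟩

lemma exists_mesh_abs_sub_le {η : ℝ → ℝ} (hη : Continuous η) {ε : ℝ} (hε : 0 < ε) :
    ∃ d > 0, ∀ (N : ℕ) (δ : ℝ), 0 < δ → δ < d → δ * N = 2 * Real.pi →
      ∀ n < N, |η (δ * (n + 1)) - η (δ * n)| ≤ ε := by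
  obtain ⟨d, hd, hdist⟩ := Metric.uniformContinuousOn_iff.1
    ((isCompact_Icc (a := 0) (b := 2 * Real.pi)).uniformContinuousOn_of_continuous
      hη.continuousOn) ε hε
  refine ⟨d, hd, fun N δ hδ hδd hN n hn => ?_⟩
  have hmem (m : ℕ) (hm : m ≤ N) : δ * m ∈ Icc 0 (2 * Real.pi) := by
    rw [← hN]
    exact ⟨by positivity, by gcongr⟩
  have hmem' := hmem (n + 1) hn
  rw [Nat.cast_succ] at hmem'
  refine (hdist _ hmem' _ (hmem n hn.le) ?_).le
  rwa [Real.dist_eq, ← mul_sub, add_sub_cancel_left, mul_one, abs_of_pos hδ]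

theorem IsCylinderGradient.winding_nonpos {Φ : ℂ → ℝ} {G : ℂ → ℂ} (H : IsCylinderGradient Φ G)
    (hΦ : ∀ m, ∃ z : ℂ, 0 ≤ z.re ∧ Φ z < m) {κ : ℝ → ℂ} (hκ : Continuous κ)
    (hκG : ∀ θ : ℝ, exp (κ θ) = G (θ * I)) {w : ℤ}
    (hw : κ (2 * Real.pi) = κ 0 + w * (2 * Real.pi * I)) : w ≤ 0 := by
  obtain ⟨M, hM⟩ := exists_abs_le_of_periodic H.periodic H.continuous 0
  obtain ⟨z, hz₀, hzM⟩ := hΦ (-M)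
  obtain ⟨B, hB⟩ := exists_abs_le_of_periodic H.periodic H.continuous z.re
  obtain ⟨C, hC⟩ : ∃ C, C = B + z.re / 16 := ⟨_, rfl⟩
  obtain ⟨d₁, hd₁, hG⟩ := exists_dist_lt_of_periodic H.periodic_gradient H.continuous_gradient
    (16 * (C + M)) (ε := 1 / 16) (by norm_num)
  obtain ⟨d₂, hd₂, hnear⟩ := Metric.eventually_nhds_iff.1
    (H.continuous.continuousAt.eventually_lt_const hzM)
  obtain ⟨d₃, hd₃, hstep⟩ :=
    exists_mesh_abs_sub_le (continuous_im.comp hκ) (ε := Real.pi / 6) (by positivity)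
  obtain ⟨N, δ, hN₁, hδ, hδd, hN⟩ := exists_mesh (d := min (min d₁ d₂ / 2) d₃) (by positivity)
  have : NeZero N := ⟨by lia⟩
  have : Fact (1 < N) := ⟨hN₁⟩
  have hδ₁ : 2 * δ < d₁ := by linarith [min_le_left (min d₁ d₂ / 2) d₃, min_le_left d₁ d₂]
  have hδ₂ : 2 * δ < d₂ := by linarith [min_le_left (min d₁ d₂ / 2) d₃, min_le_right d₁ d₂]
  have hδ₃ : δ < d₃ := hδd.trans_le (min_le_right _ _)
  have hsample : IsGridSample (N := N) (Φ ∘ gridPoint δ) (G ∘ gridPoint δ) δ M C :=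
    H.isGridSample hδ hN fun a b h₀ hR hab => (hG a b h₀ hR (hab.trans_lt hδ₁)).le
  have hMrow (i : ZMod N) : -M ≤ Φ (gridPoint δ (0, i)) :=
    (abs_le.1 (hM _ (by simp [gridPoint_re]) (by simp [gridPoint_re]))).1
  obtain ⟨j, hj, hjz, hlow⟩ :=
    exists_gridPoint_lt H.periodic hδ hN hz₀ fun y hy => hnear (hy.trans_lt hδ₂)
  have hCrow (v : ℤ × ZMod N) (h₀ : 0 ≤ v.1) (hvj : v.1 ≤ j) :
      Φ (gridPoint δ v) + δ * v.1 / 16 ≤ C := by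
    have hvz : δ * v.1 ≤ z.re := hjz.trans' (by gcongr)
    have hv := hB (gridPoint δ v) (by rw [gridPoint_re]; positivity) (by rwa [gridPoint_re])
    linarith [(abs_le.1 hv).2]
  exact H.winding_nonpos_of_isGridSample hN hsample hMrow hj hCrow hlow hκG hw
    (hstep N δ hδ hδ₃ hN)

end Cylinder

section PlaneGradient

open Complex ComplexConjugate

lemma exists_norm_gradient_lt {E : Type*} [NormedAddCommGroup E] [InnerProductSpace ℝ E]
    [ProperSpace E] {ψ : E → ℝ} {g : E → E} (hψ : ∀ x, HasGradientAt ψ (g x) x) {x : E} {r L : ℝ}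
    (hr : 0 < r) (hL : ∀ z ∈ closedBall x r, ψ x < ψ z + L) :
    ∃ z ∈ ball x r, ‖g z‖ < 2 * L / r := by
  have hL₀ : 0 < L := by simpa using hL x (mem_closedBall_self hr.le)
  have hψc : Continuous ψ := continuous_iff_continuousAt.2 fun z => (hψ z).continuousAt
  let χ : E → ℝ := fun z => ψ z + L / r ^ 2 * ‖z - x‖ ^ 2
  obtain ⟨z, hz, hmin⟩ := (isCompact_closedBall x r).exists_isMinOn ⟨x, mem_closedBall_self hr.le⟩
    (f := χ) (by fun_prop)
  have hzball : z ∈ ball x r := by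
    by_contra hzr
    have hnorm : ‖z - x‖ = r := by
      rw [← dist_eq_norm]
      exact hz.antisymm (not_lt.1 hzr)
    have hle : χ z ≤ χ x := hmin (mem_closedBall_self hr.le)
    simp only [χ, hnorm, sub_self, norm_zero, ne_eq, OfNat.ofNat_ne_zero, not_false_eq_true,
      zero_pow, mul_zero, add_zero, div_mul_cancel₀ L (pow_pos hr 2).ne'] at hle
    exact hle.not_gt (hL z hz)
  have hχ : HasFDerivAt χ (InnerProductSpace.toDual ℝ E (g z) +
      (L / r ^ 2) • (2 • innerSL ℝ (z - x))) z :=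
    (hψ z).hasFDerivAt.add (((hasFDerivAt_id z).sub_const x).norm_sq.const_mul (L / r ^ 2))
  have hcrit := (hmin.isLocalMin (closedBall_mem_nhds_of_mem hzball)).hasFDerivAt_eq_zero hχ
  have hg : g z = -(2 * L / r ^ 2) • (z - x) := by
    refine ext_inner_right ℝ fun v => ?_
    have hv := DFunLike.congr_fun hcrit v
    simp only [add_apply, smul_apply,
      InnerProductSpace.toDual_apply_apply, innerSL_apply_apply, zero_apply,
      smul_eq_mul, nsmul_eq_mul, Nat.cast_ofNat] at hv
    rw [real_inner_smul_left]
    linear_combination hv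
  refine ⟨z, hzball, ?_⟩
  rw [hg, norm_smul, norm_neg, Real.norm_of_nonneg (by positivity)]
  calc
    _ < 2 * L / r ^ 2 * r := by
      gcongr
      rwa [← dist_eq_norm]
    _ = 2 * L / r := by field_simp

lemma unbounded_of_le_norm_gradient {E : Type*} [NormedAddCommGroup E] [InnerProductSpace ℝ E]
    [ProperSpace E] [Nontrivial E] {ψ : E → ℝ} {g : E → E} (hψ : ∀ x, HasGradientAt ψ (g x) x)
    {R ε : ℝ} (hε : 0 < ε) (hg : ∀ x, R ≤ ‖x‖ → ε ≤ ‖g x‖) :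
    (∀ m, ∃ x, R ≤ ‖x‖ ∧ ψ x < m) ∨ ∀ m, ∃ x, R ≤ ‖x‖ ∧ -ψ x < m := by
  by_contra! h
  obtain ⟨⟨m, hm⟩, n, hn⟩ := h
  obtain ⟨L, hL, hL₀⟩ : ∃ L, -(m + n) < L ∧ 0 < L := ⟨|m + n| + 1, by
    linarith [neg_abs_le (m + n)], by positivity⟩
  have hr : 0 < 2 * L / ε := by positivity
  obtain ⟨x, hx⟩ := exists_norm_eq E (c := |R| + 2 * L / ε) (by positivity)
  have hball (z : E) (hz : z ∈ closedBall x (2 * L / ε)) : R ≤ ‖z‖ := by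
    have := norm_sub_norm_le x z
    rw [mem_closedBall', dist_eq_norm] at hz
    linarith [le_abs_self R]
  obtain ⟨z, hz, hgz⟩ := exists_norm_gradient_lt hψ (x := x) (L := L) hr fun z hz => by
    linarith [hm z (hball z hz), hn x (hball x (mem_closedBall_self hr.le))]
  rw [div_div_cancel₀ (by positivity)] at hgz
  exact hgz.not_ge (hg z (hball z (ball_subset_closedBall hz)))

lemma hasGradientAt_comp {ψ : ℂ → ℝ} {F : ℂ → ℂ} {g F' z : ℂ}
    (hψ : HasGradientAt ψ g (F z)) (hF : HasDerivAt F F' z) :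
    HasGradientAt (fun z => ψ (F z)) (g * conj F') z := by
  refine (hψ.hasFDerivAt.comp z hF.complexToReal_fderiv).congr_fderiv ?_
  ext w
  simp only [ContinuousLinearMap.comp_apply, smul_apply, one_apply_eq_self, smul_eq_mul,
    InnerProductSpace.toDual_apply_apply, Complex.inner, map_mul, conj_conj]
  exact congrArg re (by ring)

variable {ψ : ℂ → ℝ} {g : ℂ → ℂ} {R ε : ℝ}

lemma isCylinderGradient_exp (hψ : ∀ z, HasGradientAt ψ (g z) z) (hg : Continuous g)
    (hR : 0 < R) (hεR : 1 ≤ ε * R) (hgε : ∀ z, R ≤ ‖z‖ → ε ≤ ‖g z‖) :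
    IsCylinderGradient (fun ζ => ψ (R * exp ζ))
      fun ζ => g (R * exp ζ) * conj (R * exp ζ) where
  periodic ζ := by simp only [exp_periodic ζ]
  hasGradientAt ζ := hasGradientAt_comp (hψ _) ((hasDerivAt_exp ζ).const_mul (R : ℂ))
  continuous_gradient := by fun_prop
  one_le_norm ζ hζ := by
    have hnorm : R ≤ ‖R * exp ζ‖ := by
      rw [norm_mul, norm_real, Real.norm_of_nonneg hR.le, norm_exp]
      exact le_mul_of_one_le_right hR.le (Real.one_le_exp hζ)
    rw [norm_mul, RCLike.norm_conj]
    exact hεR.trans (mul_le_mul (hgε _ hnorm) hnorm hR.le (norm_nonneg _))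

lemma winding_nonpos_of_unbounded_below (hψ : ∀ z, HasGradientAt ψ (g z) z) (hg : Continuous g)
    (hR : 0 < R) (hεR : 1 ≤ ε * R) (hgε : ∀ z, R ≤ ‖z‖ → ε ≤ ‖g z‖)
    (hunb : ∀ m, ∃ z, R ≤ ‖z‖ ∧ ψ z < m) {κ : ℝ → ℂ} (hκ : Continuous κ)
    (hκg : ∀ θ : ℝ, exp (κ θ) = g (circleMap 0 R θ) * conj (circleMap 0 R θ)) {w : ℤ}
    (hw : κ (2 * Real.pi) = κ 0 + w * (2 * Real.pi * I)) : w ≤ 0 := by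
  refine (isCylinderGradient_exp hψ hg hR hεR hgε).winding_nonpos (fun m => ?_) hκ
    (fun θ => by rw [hκg, circleMap_zero]) hw
  obtain ⟨z, hzR, hz⟩ := hunb m
  have hR₀ : (R : ℂ) ≠ 0 := ofReal_ne_zero.2 hR.ne'
  have hz₀ : z ≠ 0 := norm_pos_iff.1 (hR.trans_le hzR)
  refine ⟨log (z / R), ?_, ?_⟩
  · rw [log_re, norm_div, norm_real, Real.norm_of_nonneg hR.le]
    exact Real.log_nonneg ((one_le_div hR).2 hzR)
  · rwa [exp_log (div_ne_zero hz₀ hR₀), mul_div_cancel₀ _ hR₀]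

theorem winding_nonpos_of_le_norm_gradient (hψ : ∀ z, HasGradientAt ψ (g z) z)
    (hg : Continuous g) (hR : 0 < R) (hεR : 1 ≤ ε * R) (hgε : ∀ z, R ≤ ‖z‖ → ε ≤ ‖g z‖)
    {κ : ℝ → ℂ} (hκ : Continuous κ)
    (hκg : ∀ θ : ℝ, exp (κ θ) = g (circleMap 0 R θ) * conj (circleMap 0 R θ)) {w : ℤ}
    (hw : κ (2 * Real.pi) = κ 0 + w * (2 * Real.pi * I)) : w ≤ 0 := by
  have hε : 0 < ε := pos_of_mul_pos_left (by linarith) hR.le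
  rcases unbounded_of_le_norm_gradient hψ hε hgε with hunb | hunb
  · exact winding_nonpos_of_unbounded_below hψ hg hR hεR hgε hunb hκ hκg hw
  · refine winding_nonpos_of_unbounded_below (ψ := -ψ) (g := -g) (fun z => ?_) hg.neg hR hεR
      (by simpa using hgε) hunb (κ := fun θ => κ θ + Real.pi * I) (by fun_prop) (fun θ => ?_)
      (by rw [hw]; ring)
    · exact (hψ z).hasFDerivAt.neg.congr_fderiv (map_neg _ _).symm
    · rw [exp_add, exp_pi_mul_I, hκg, Pi.neg_apply]
      ring

end PlaneGradient

section WindingNumber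

open Complex

lemma exists_continuous_log_lift {γ : ℝ → ℂ} (hγ : Continuous γ) (hγ₀ : ∀ θ, γ θ ≠ 0) {T : ℝ}
    (hT : Function.Periodic γ T) :
    ∃ κ : ℝ → ℂ, Continuous κ ∧ (∀ θ, exp (κ θ) = γ θ) ∧
      ∃ w : ℤ, ∀ θ, κ (θ + T) = κ θ + w * (2 * Real.pi * I) := by
  obtain ⟨κ, ⟨hκ₀, hκγ⟩, hunique⟩ := isCoveringMapOn_exp.existsUnique_continuousMap_lifts
    (⟨γ, hγ⟩ : C(ℝ, ℂ)) (a₀ := 0) (exp_log (hγ₀ 0)) hγ₀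
  have hexp (θ : ℝ) : exp (κ θ) = γ θ := congrFun hκγ θ
  obtain ⟨w, hw⟩ := exp_eq_exp_iff_exists_int.1
    (show exp (κ (0 + T)) = exp (κ 0) by rw [hexp, hexp, hT])
  let κT : C(ℝ, ℂ) := ⟨fun θ => κ (θ + T) - w * (2 * Real.pi * I), by fun_prop⟩
  have hκT : κT = κ := by
    refine hunique κT ⟨?_, funext fun θ => ?_⟩
    · rw [← hκ₀]
      exact sub_eq_of_eq_add hw
    · change exp (κ (θ + T) - w * (2 * Real.pi * I)) = γ θ
      rw [exp_sub, exp_int_mul_two_pi_mul_I, div_one, hexp, hT]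
  exact ⟨κ, κ.continuous, hexp, w, fun θ => (sub_eq_iff_eq_add.1 (DFunLike.congr_fun hκT θ))⟩

lemma exists_continuous_comp_circleMap_eq {K : ℝ → ℂ} (hK : Continuous K)
    (hper : Function.Periodic K (2 * Real.pi)) {R : ℝ} (hR : 0 < R) :
    ∃ k : ℂ → ℂ, Continuous k ∧ ∀ θ, k (circleMap 0 R θ) = K θ := by
  let K' : Real.Angle → ℂ := hper.lift
  have hK' : Continuous K' := continuous_coinduced_dom.2 hK
  have hcont : ContinuousOn (fun z : ℂ => K' (arg z)) (sphere 0 R) := fun z hz =>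
    (hK'.continuousAt.comp
      (continuousAt_arg_coe_angle (ne_of_mem_sphere hz hR.ne'))).continuousWithinAt
  obtain ⟨k, hk⟩ := ContinuousMap.exists_restrict_eq isClosed_sphere
    ⟨_, continuousOn_iff_continuous_domRestrict.1 hcont⟩
  refine ⟨k, k.continuous, fun θ => ?_⟩
  calc
    k (circleMap 0 R θ) = K' (arg (circleMap 0 R θ)) :=
      DFunLike.congr_fun hk ⟨_, circleMap_mem_sphere 0 hR.le θ⟩
    _ = K' θ := by
      congr 1
      rw [circleMap_zero, exp_mul_I]
      simpa using arg_mul_cos_add_sin_mul_I_coe_angle hR θ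
    _ = K θ := rfl

end WindingNumber

/-- The isometric identification of `ℂ` with the Euclidean plane. -/
def complexToPlane : ℂ ≃ₗᵢ[ℝ] Euc 2 := Complex.orthonormalBasisOneI.repr

namespace DegreeTheory

open Complex ComplexConjugate

variable (D : DegreeTheory 2)

/-- The degree of a self-map of `ℂ`, read off from its conjugate by `complexToPlane`. -/
def complexDeg (g : ℂ → ℂ) (Ω : Set ℂ) : ℤ :=
  D.deg (complexToPlane ∘ g ∘ complexToPlane.symm) (complexToPlane.symm ⁻¹' Ω)

variable {g g₀ g₁ : ℂ → ℂ} {Ω Ω₁ Ω₂ : Set ℂ}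

lemma closure_preimage_complexToPlane_symm (Ω : Set ℂ) :
    closure (complexToPlane.symm ⁻¹' Ω) = complexToPlane.symm ⁻¹' closure Ω :=
  (complexToPlane.symm.toHomeomorph.preimage_closure Ω).symm

lemma frontier_preimage_complexToPlane_symm (Ω : Set ℂ) :
    frontier (complexToPlane.symm ⁻¹' Ω) = complexToPlane.symm ⁻¹' frontier Ω :=
  (complexToPlane.symm.toHomeomorph.preimage_frontier Ω).symm

lemma isBounded_preimage_complexToPlane_symm (hb : Bornology.IsBounded Ω) :
    Bornology.IsBounded (complexToPlane.symm ⁻¹' Ω) :=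
  complexToPlane.symm.antilipschitz.isBounded_preimage hb

lemma deg_ball_zero_eq_complexDeg (f : Euc 2 → Euc 2) (R : ℝ) :
    D.deg f (ball 0 R) =
      D.complexDeg (complexToPlane.symm ∘ f ∘ complexToPlane) (ball 0 R) := by
  have hf : complexToPlane ∘ (complexToPlane.symm ∘ f ∘ complexToPlane) ∘ complexToPlane.symm = f :=
    funext fun x => by simp
  rw [complexDeg, hf, LinearIsometryEquiv.preimage_ball, LinearIsometryEquiv.symm_symm, map_zero]

lemma complexDeg_id (ho : IsOpen Ω) (hb : Bornology.IsBounded Ω) (h₀ : 0 ∈ Ω) :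
    D.complexDeg id Ω = 1 := by
  have hid : complexToPlane ∘ id ∘ complexToPlane.symm = id :=
    funext complexToPlane.apply_symm_apply
  rw [complexDeg, hid]
  exact D.normalized _ (ho.preimage complexToPlane.symm.continuous)
    (isBounded_preimage_complexToPlane_symm hb) (by simpa using h₀)

lemma complexDeg_eq_add (hg : ContinuousOn g (closure Ω)) (ho : IsOpen Ω)
    (hb : Bornology.IsBounded Ω) (ho₁ : IsOpen Ω₁) (ho₂ : IsOpen Ω₂) (h₁ : Ω₁ ⊆ Ω) (h₂ : Ω₂ ⊆ Ω)
    (hd : Disjoint Ω₁ Ω₂) (hg₀ : ∀ z ∈ closure Ω \ (Ω₁ ∪ Ω₂), g z ≠ 0) :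
    D.complexDeg g Ω = D.complexDeg g Ω₁ + D.complexDeg g Ω₂ := by
  have hc := complexToPlane.symm.continuous
  refine D.additive _ _ _ _ (ho.preimage hc) (isBounded_preimage_complexToPlane_symm hb)
    (ho₁.preimage hc) (ho₂.preimage hc) (preimage_mono h₁) (preimage_mono h₂) (hd.preimage _) ?_ ?_
  · rw [closure_preimage_complexToPlane_symm]
    exact complexToPlane.continuous.comp_continuousOn
      (hg.comp hc.continuousOn (mapsTo_preimage _ _))
  · rw [closure_preimage_complexToPlane_symm]
    intro x hx
    simpa using hg₀ (complexToPlane.symm x) hx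

lemma complexDeg_empty (g : ℂ → ℂ) : D.complexDeg g ∅ = 0 := by
  have h : D.complexDeg g ∅ = D.complexDeg g ∅ + D.complexDeg g ∅ :=
    D.complexDeg_eq_add (by simp) isOpen_empty Bornology.isBounded_empty isOpen_empty isOpen_empty
      subset_rfl subset_rfl (disjoint_empty _) (by simp)
  linarith

lemma complexDeg_eq_of_subset (hg : ContinuousOn g (closure Ω)) (ho : IsOpen Ω)
    (hb : Bornology.IsBounded Ω) (ho₁ : IsOpen Ω₁) (h₁ : Ω₁ ⊆ Ω)
    (hg₀ : ∀ z ∈ closure Ω \ Ω₁, g z ≠ 0) : D.complexDeg g Ω = D.complexDeg g Ω₁ := by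
  rw [D.complexDeg_eq_add hg ho hb ho₁ isOpen_empty h₁ (empty_subset _) (disjoint_empty _)
    (by rwa [union_empty]), complexDeg_empty, add_zero]

lemma complexDeg_ball_eq (hg : Continuous g) {c c' : ℂ} (hg₀ : ∀ z, g z = 0 → z = c) {r s : ℝ}
    (hs : 0 < s) (hrs : ball c s ⊆ ball c' r) :
    D.complexDeg g (ball c' r) = D.complexDeg g (ball c s) := by
  refine D.complexDeg_eq_of_subset hg.continuousOn isOpen_ball isBounded_ball isOpen_ball hrs
    fun z hz hz₀ => hz.2 ?_
  rw [hg₀ z hz₀]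
  exact mem_ball_self hs

lemma complexDeg_ball_zero_eq (hg : Continuous g) (hg₀ : ∀ z, g z = 0 → z = 0) {r s : ℝ}
    (hr : 0 < r) (hs : 0 < s) : D.complexDeg g (ball 0 r) = D.complexDeg g (ball 0 s) := by
  wlog hsr : s ≤ r generalizing r s
  · exact (this hs hr (le_of_not_ge hsr)).symm
  exact D.complexDeg_ball_eq hg hg₀ hs (ball_subset_ball hsr)

lemma complexDeg_eq_of_homotopy {h : ℝ → ℂ → ℂ}
    (hh : ContinuousOn (fun p : ℝ × ℂ => h p.1 p.2) (Icc 0 1 ×ˢ closure Ω)) (ho : IsOpen Ω)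
    (hb : Bornology.IsBounded Ω) (hh₀ : ∀ t ∈ Icc (0 : ℝ) 1, ∀ z ∈ frontier Ω, h t z ≠ 0) :
    D.complexDeg (h 0) Ω = D.complexDeg (h 1) Ω := by
  have hc := complexToPlane.symm.continuous
  refine D.homotopyInv (fun t => complexToPlane ∘ h t ∘ complexToPlane.symm) _ (ho.preimage hc)
    (isBounded_preimage_complexToPlane_symm hb) ?_ fun t ht x hx => ?_
  · rw [closure_preimage_complexToPlane_symm]
    exact complexToPlane.continuous.comp_continuousOn
      (hh.comp (by fun_prop : Continuous fun p : ℝ × Euc 2 =>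
        (p.1, complexToPlane.symm p.2)).continuousOn fun p hp => hp)
  · rw [frontier_preimage_complexToPlane_symm] at hx
    simpa using hh₀ t ht _ hx

/-- Rouché's theorem. -/
lemma complexDeg_eq_of_norm_sub_lt (hg₀ : ContinuousOn g₀ (closure Ω))
    (hg₁ : ContinuousOn g₁ (closure Ω)) (ho : IsOpen Ω) (hb : Bornology.IsBounded Ω)
    (hlt : ∀ z ∈ frontier Ω, ‖g₁ z - g₀ z‖ < ‖g₀ z‖) :
    D.complexDeg g₀ Ω = D.complexDeg g₁ Ω := by
  have h := D.complexDeg_eq_of_homotopy (Ω := Ω) (h := fun t z => g₀ z + t * (g₁ z - g₀ z)) ?_ ho hb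
    fun t ht z hz => ?_
  · simpa using h
  · have hsnd : MapsTo Prod.snd (Icc (0 : ℝ) 1 ×ˢ closure Ω) (closure Ω) := fun p hp => hp.2
    have h₀ := hg₀.comp continuousOn_snd hsnd
    have h₁ := hg₁.comp continuousOn_snd hsnd
    exact h₀.add ((by fun_prop : Continuous fun p : ℝ × ℂ => (p.1 : ℂ)).continuousOn.mul
      (h₁.sub h₀))
  · intro h₀
    have hle : ‖g₀ z‖ ≤ ‖g₁ z - g₀ z‖ := by
      refine (congrArg norm (eq_neg_of_add_eq_zero_left h₀)).trans_le ?_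
      rw [norm_neg, norm_mul, norm_real, Real.norm_of_nonneg ht.1]
      exact mul_le_of_le_one_left (norm_nonneg _) ht.2
    exact (hlt z hz).not_ge hle

lemma complexDeg_eq_of_eq_mul_exp {k : ℂ → ℂ} (hg₀ : ContinuousOn g₀ (closure Ω))
    (hg₁ : ContinuousOn g₁ (closure Ω)) (hk : ContinuousOn k (closure Ω)) (ho : IsOpen Ω)
    (hb : Bornology.IsBounded Ω) (hne : ∀ z ∈ frontier Ω, g₀ z ≠ 0)
    (heq : ∀ z ∈ frontier Ω, g₁ z = g₀ z * exp (k z)) :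
    D.complexDeg g₁ Ω = D.complexDeg g₀ Ω := by
  have hexp : D.complexDeg g₀ Ω = D.complexDeg (fun z => g₀ z * exp (k z)) Ω := by
    have h := D.complexDeg_eq_of_homotopy (Ω := Ω) (h := fun t z => g₀ z * exp (t * k z)) ?_ ho hb
      fun t _ z hz => mul_ne_zero (hne z hz) (exp_ne_zero _)
    · simpa using h
    · have hsnd : MapsTo Prod.snd (Icc (0 : ℝ) 1 ×ˢ closure Ω) (closure Ω) := fun p hp => hp.2
      exact (hg₀.comp continuousOn_snd hsnd).mul (((by fun_prop :
        Continuous fun p : ℝ × ℂ => (p.1 : ℂ)).continuousOn.mul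
          (hk.comp continuousOn_snd hsnd)).cexp)
  rw [hexp]
  refine D.complexDeg_eq_of_norm_sub_lt hg₁ (hg₀.mul hk.cexp) ho hb fun z hz => ?_
  rw [← heq z hz, sub_self, norm_zero, norm_pos_iff, heq z hz]
  exact mul_ne_zero (hne z hz) (exp_ne_zero _)

lemma complexDeg_sub_const_ball (c : ℂ) {r : ℝ} (hr : 0 < r) :
    D.complexDeg (fun z => z - c) (ball c r) = 1 := by
  have hR : 0 < ‖c‖ + r := by positivity
  calc
    D.complexDeg (fun z => z - c) (ball c r)
      = D.complexDeg (fun z => z - c) (ball 0 (‖c‖ + r)) :=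
        (D.complexDeg_ball_eq (by fun_prop) (fun z hz => sub_eq_zero.1 hz) hr
          (ball_subset_ball' (by rw [dist_zero_right, add_comm]))).symm
    _ = D.complexDeg id (ball 0 (‖c‖ + r)) := by
        refine (D.complexDeg_eq_of_norm_sub_lt continuousOn_id (by fun_prop) isOpen_ball
          isBounded_ball fun z hz => ?_).symm
        rw [frontier_ball _ hR.ne', mem_sphere_zero_iff_norm] at hz
        rw [id, sub_sub_cancel_left, norm_neg, hz]
        exact lt_add_of_pos_right _ hr
    _ = 1 := D.complexDeg_id isOpen_ball isBounded_ball (mem_ball_self hR)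

lemma complexDeg_sub_one_mul_conj_pow_ball_zero (n : ℕ) :
    D.complexDeg (fun z => (z - 1) * conj z ^ n) (ball 0 (1 / 2)) =
      D.complexDeg (fun z => conj z ^ n) (ball 0 (1 / 2)) := by
  have hslit (z : ℂ) (hz : z ∈ closure (ball (0 : ℂ) (1 / 2))) : 1 - z ∈ slitPlane := by
    rw [closure_ball _ (by norm_num), mem_closedBall_zero_iff] at hz
    left
    rw [sub_re, one_re]
    linarith [re_le_norm z]
  refine D.complexDeg_eq_of_eq_mul_exp (k := fun z => log (1 - z) + Real.pi * I) (by fun_prop)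
    (by fun_prop) (((by fun_prop : ContinuousOn (fun z : ℂ => 1 - z) _).clog hslit).add_const _)
    isOpen_ball isBounded_ball (fun z hz => ?_) fun z hz => ?_
  · rw [frontier_ball _ (by norm_num)] at hz
    exact pow_ne_zero n ((map_ne_zero _).2 (ne_of_mem_sphere hz (by norm_num)))
  · rw [exp_add, exp_log (slitPlane_ne_zero (hslit z (frontier_subset_closure hz))), exp_pi_mul_I]
    ring

lemma complexDeg_sub_one_mul_conj_pow_ball_one (n : ℕ) :
    D.complexDeg (fun z => (z - 1) * conj z ^ n) (ball 1 (1 / 2)) = 1 := by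
  have hslit (z : ℂ) (hz : z ∈ closure (ball (1 : ℂ) (1 / 2))) : conj z ∈ slitPlane := by
    rw [closure_ball _ (by norm_num), mem_closedBall, dist_eq_norm, norm_sub_rev] at hz
    left
    have := re_le_norm (1 - z)
    rw [sub_re, one_re] at this
    rw [conj_re]
    linarith
  rw [← D.complexDeg_sub_const_ball 1 one_half_pos]
  refine D.complexDeg_eq_of_eq_mul_exp (k := fun z => n * log (conj z)) (by fun_prop)
    (by fun_prop) (((by fun_prop : ContinuousOn (fun z : ℂ => conj z) _).clog hslit).const_mul _)
    isOpen_ball isBounded_ball (fun z hz => ?_) fun z hz => ?_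
  · rw [frontier_ball _ (by norm_num)] at hz
    exact sub_ne_zero.2 (ne_of_mem_sphere hz (by norm_num))
  · rw [exp_nat_mul, exp_log (slitPlane_ne_zero (hslit z (frontier_subset_closure hz)))]

lemma complexDeg_mul_conj_pow_ball_two (n : ℕ) :
    D.complexDeg (fun z => z * conj z ^ n) (ball 0 2) =
      D.complexDeg (fun z => conj z ^ n) (ball 0 1) + 1 := by
  calc
    D.complexDeg (fun z => z * conj z ^ n) (ball 0 2)
      = D.complexDeg (fun z => (z - 1) * conj z ^ n) (ball 0 2) := by
        refine D.complexDeg_eq_of_norm_sub_lt (by fun_prop) (by fun_prop) isOpen_ball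
          isBounded_ball fun z hz => ?_
        rw [frontier_ball _ two_ne_zero, mem_sphere_zero_iff_norm] at hz
        rw [← sub_mul, sub_sub_cancel_left, norm_mul, norm_mul, norm_neg, norm_one, norm_pow,
          RCLike.norm_conj, hz]
        gcongr
        norm_num
    _ = D.complexDeg (fun z => (z - 1) * conj z ^ n) (ball 0 (1 / 2)) +
          D.complexDeg (fun z => (z - 1) * conj z ^ n) (ball 1 (1 / 2)) := by
        refine D.complexDeg_eq_add (by fun_prop) isOpen_ball isBounded_ball isOpen_ball isOpen_ball
          (ball_subset_ball (by norm_num)) (ball_subset_ball' (by norm_num))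
          (ball_disjoint_ball (by norm_num)) fun z hz hz₀ => hz.2 ?_
        rcases mul_eq_zero.1 hz₀ with h | h
        · exact Or.inr (by simp [sub_eq_zero.1 h])
        · exact Or.inl (by simp [(map_eq_zero _).1 (eq_zero_of_pow_eq_zero h)])
    _ = D.complexDeg (fun z => conj z ^ n) (ball 0 1) + 1 := by
        rw [complexDeg_sub_one_mul_conj_pow_ball_zero, complexDeg_sub_one_mul_conj_pow_ball_one,
          D.complexDeg_ball_zero_eq (by fun_prop) (fun z hz => ?_) one_half_pos one_pos]
        exact (map_eq_zero _).1 (eq_zero_of_pow_eq_zero hz)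

lemma complexDeg_mul_conj_pow_ball (n : ℕ) {R : ℝ} (hR : 0 < R) :
    D.complexDeg (fun z => z * conj z ^ n) (ball 0 R) = 1 - n := by
  have hzero (m : ℕ) (z : ℂ) (hz : z * conj z ^ m = 0) : z = 0 :=
    (mul_eq_zero.1 hz).elim id fun h => (map_eq_zero _).1 (eq_zero_of_pow_eq_zero h)
  induction n generalizing R with
  | zero =>
    simp only [pow_zero, mul_one, Nat.cast_zero, sub_zero]
    exact D.complexDeg_id isOpen_ball isBounded_ball (mem_ball_self hR)
  | succ n ih =>
    -- On the unit circle `z * conj z = 1`.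
    have hunit : D.complexDeg (fun z => z * conj z ^ (n + 1)) (ball 0 1) =
        D.complexDeg (fun z => conj z ^ n) (ball 0 1) := by
      refine D.complexDeg_eq_of_eq_mul_exp (k := 0) (by fun_prop) (by fun_prop) continuousOn_const
        isOpen_ball isBounded_ball (fun z hz => ?_) fun z hz => ?_
      all_goals rw [frontier_ball _ one_ne_zero] at hz
      · exact pow_ne_zero n ((map_ne_zero _).2 (ne_of_mem_sphere hz one_ne_zero))
      · rw [pow_succ', ← mul_assoc, mul_conj, normSq_eq_norm_sq, mem_sphere_zero_iff_norm.1 hz]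
        simp
    have htwo := D.complexDeg_mul_conj_pow_ball_two n
    rw [ih two_pos] at htwo
    rw [D.complexDeg_ball_zero_eq (by fun_prop) (hzero _) hR one_pos, hunit]
    push_cast
    linarith

lemma complexDeg_ball_eq_one_sub (hg : Continuous g) {R : ℝ} (hR : 0 < R) {κ : ℝ → ℂ}
    (hκ : Continuous κ) (hκg : ∀ θ, exp (κ θ) = g (circleMap 0 R θ) * conj (circleMap 0 R θ))
    {n : ℕ} (hn : ∀ θ, κ (θ + 2 * Real.pi) = κ θ - n * (2 * Real.pi * I)) :
    D.complexDeg g (ball 0 R) = 1 - n := by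
  obtain ⟨k, hk, hkκ⟩ := exists_continuous_comp_circleMap_eq
    (K := fun θ => κ θ + n * (θ * I) - (n + 2) * Real.log R) (by fun_prop)
    (fun θ => by simp only [hn]; push_cast; ring) hR
  rw [← D.complexDeg_mul_conj_pow_ball n hR]
  refine D.complexDeg_eq_of_eq_mul_exp (by fun_prop) hg.continuousOn hk.continuousOn isOpen_ball
    isBounded_ball (fun z hz => ?_) fun z hz => ?_
  all_goals rw [frontier_ball _ hR.ne'] at hz
  · have hz₀ : z ≠ 0 := ne_of_mem_sphere hz hR.ne'
    exact mul_ne_zero hz₀ (pow_ne_zero n ((map_ne_zero _).2 hz₀))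
  · obtain ⟨θ, rfl⟩ : ∃ θ, circleMap 0 R θ = z := by
      rwa [← abs_of_pos hR, ← range_circleMap] at hz
    have hexp : circleMap 0 R θ = exp (Real.log R + θ * I) := by
      rw [circleMap_zero, exp_add, ← ofReal_exp, Real.exp_log hR]
    have hconj : conj (circleMap 0 R θ) = exp (Real.log R - θ * I) := by
      rw [hexp, ← exp_conj, map_add, map_mul, conj_ofReal, conj_ofReal, conj_I, mul_neg,
        ← sub_eq_add_neg]
    apply mul_right_cancel₀ ((map_ne_zero conj).2 (circleMap_ne_center (c := 0) (θ := θ) hR.ne'))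
    rw [← hκg, hkκ, hconj, hexp, ← exp_nat_mul, ← exp_add, ← exp_add, ← exp_add]
    congr 1
    ring

lemma complexDeg_ball_le_one {ψ : ℂ → ℝ} (hψ : ∀ z, HasGradientAt ψ (g z) z) (hg : Continuous g)
    {R ε : ℝ} (hR : 0 < R) (hεR : 1 ≤ ε * R) (hgε : ∀ z, R ≤ ‖z‖ → ε ≤ ‖g z‖) :
    D.complexDeg g (ball 0 R) ≤ 1 := by
  have hε : 0 < ε := pos_of_mul_pos_left (by linarith) hR.le
  have hne (θ : ℝ) : g (circleMap 0 R θ) * conj (circleMap 0 R θ) ≠ 0 := by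
    have hnorm : R ≤ ‖circleMap 0 R θ‖ := by rw [norm_circleMap_zero, abs_of_pos hR]
    exact mul_ne_zero (norm_pos_iff.1 (hε.trans_le (hgε _ hnorm)))
      ((map_ne_zero _).2 (circleMap_ne_center hR.ne'))
  obtain ⟨κ, hκ, hκg, w, hw⟩ := exists_continuous_log_lift (by fun_prop) hne
    ((periodic_circleMap 0 R).comp fun z => g z * conj z)
  have hw₀ : w ≤ 0 := winding_nonpos_of_le_norm_gradient hψ hg hR hεR hgε hκ hκg
    (by simpa using hw 0)
  obtain ⟨n, rfl⟩ := Int.exists_eq_neg_ofNat hw₀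
  rw [D.complexDeg_ball_eq_one_sub hg hR hκ hκg (n := n) fun θ => by rw [hw]; push_cast; ring]
  simp

end DegreeTheory

section Gradient

variable {n : ℕ} {f : Euc n → Euc n}

lemma IsGradient.exists_hasGradientAt (hf : IsGradient f) :
    ∃ φ : Euc n → ℝ, ∀ x, HasGradientAt φ (f x) x := by
  obtain ⟨φ, hφ, hφf⟩ := hf
  exact ⟨φ, fun x => hφf x ▸ (hφ.differentiable one_ne_zero x).hasGradientAt⟩

lemma IsGradient.continuous (hf : IsGradient f) : Continuous f := by
  obtain ⟨φ, hφ, hφf⟩ := hf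
  rw [← funext hφf]
  exact (LinearIsometryEquiv.continuous _).comp (hφ.continuous_fderiv one_ne_zero)

lemma IsProper.eventually_one_le_norm (hf : IsProper f) :
    ∀ᶠ x in cocompact (Euc n), 1 ≤ ‖f x‖ := by
  filter_upwards [(hf _ (isCompact_closedBall 0 1)).compl_mem_cocompact] with x hx
  exact (not_le.1 fun h => hx (mem_closedBall_zero_iff.2 h)).le

lemma hasGradientAt_comp_linearIsometryEquiv {E F : Type*} [NormedAddCommGroup E]
    [InnerProductSpace ℝ E] [CompleteSpace E] [NormedAddCommGroup F] [InnerProductSpace ℝ F]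
    [CompleteSpace F] (e : E ≃ₗᵢ[ℝ] F) {φ : F → ℝ} {v : F} {x : E}
    (hφ : HasGradientAt φ v (e x)) : HasGradientAt (φ ∘ e) (e.symm v) x := by
  refine (hφ.hasFDerivAt.comp x e.toContinuousLinearEquiv.hasFDerivAt).congr_fderiv ?_
  ext w
  simp [← e.inner_map_map (e.symm v) w]

end Gradient

theorem no_proper_gradient_map_of_deg_gt_one_general {k : ℤ} {D : DegreeTheory 2}
    {f : Euc 2 → Euc 2} (hf : IsGradient f) {ε : ℝ} (hε : 0 < ε)
    (hfε : ∀ᶠ x in cocompact (Euc 2), ε ≤ ‖f x‖) (hk : HasDeg D f k) : k ≤ 1 := by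
  obtain ⟨φ, hφ⟩ := hf.exists_hasGradientAt
  rw [← cobounded_eq_cocompact, hasBasis_cobounded_norm.eventually_iff] at hfε
  obtain ⟨R₀, -, hR₀⟩ := hfε
  obtain ⟨R, hR, hRε⟩ : ∃ R, R₀ ≤ R ∧ 1 / ε ≤ R := ⟨_, le_max_left _ _, le_max_right _ _⟩
  have hRpos : 0 < R := (one_div_pos.2 hε).trans_le hRε
  have hfR (x : Euc 2) (hx : R ≤ ‖x‖) : ε ≤ ‖f x‖ := hR₀ (hR.trans hx)
  have hzeros : f ⁻¹' {0} ⊆ ball 0 R := fun x (hx : f x = 0) => by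
    rw [mem_ball_zero_iff]
    by_contra! hxR
    exact hε.not_ge (by simpa [hx] using hfR x hxR)
  rw [← hk R hRpos hzeros, D.deg_ball_zero_eq_complexDeg]
  refine D.complexDeg_ball_le_one (fun z => hasGradientAt_comp_linearIsometryEquiv _ (hφ _))
    ((map_continuous _).comp (hf.continuous.comp (map_continuous _))) hRpos
    ((div_le_iff₀' hε).1 hRε) fun z hz => ?_
  simpa using hfR (complexToPlane z) (by simpa using hz)

/-- for `k > 1` there is no proper gradient map `f : ℝ² → ℝ²` of Brouwer
degree `k`; the set of proper gradient homotopy classes of degree `k` is empty. -/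
theorem no_proper_gradient_map_of_deg_gt_one (k : ℤ) (hk : 1 < k) (D : DegreeTheory 2) :
    ¬ ∃ f : Euc 2 → Euc 2, IsGradient f ∧ IsProper f ∧ HasDeg D f k := by
  rintro ⟨f, hf, hproper, hdeg⟩
  exact hk.not_ge (no_proper_gradient_map_of_deg_gt_one_general hf one_pos
    hproper.eventually_one_le_norm hdeg)
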